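/- arXiv:2009.12685 — 5 statements merged into one kernel-verified Lean document; each statement's English description precedes it below -/
import Mathlib

section
/- Let d ≥ 2 and let A be a d-by-n random matrix whose entries are independent standard Gaussian random variables, with n/d ≥ c₀ for some constant c₀ > 1. Then there exist constants c₂, c₄ > 1 and 0 < c₆ < 1, depending only on c₀, such that with probability at least 1 − 2·c₄·c₆^d one has min over subsets S ⊆ [n] with |S| = d of σ_d(A_S) ≤ 1/(c₄·c₂^{d−1}). In other words, with exponentially high probability some d-by-d submatrix of A has exponentially small smallest singular value. -/
open MeasureTheory ProbabilityTheory

/-- The smallest singular value of a `d`-by-`d` real matrix: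
the infimum of `‖M x‖₂` over unit vectors `x`. -/
noncomputable def sigmaMin {d : ℕ} (M : Matrix (Fin d) (Fin d) ℝ) : ℝ :=
  sInf { r : ℝ | ∃ x : EuclideanSpace ℝ (Fin d), ‖x‖ = 1 ∧
    r = ‖(EuclideanSpace.equiv (Fin d) ℝ).symm (M.mulVec ((EuclideanSpace.equiv (Fin d) ℝ) x))‖ }


section gauss
variable {E : Type*} [NormedAddCommGroup E] [InnerProductSpace ℝ E] [FiniteDimensional ℝ E]
  [MeasurableSpace E] [BorelSpace E]

lemma aux_law_inner (u : E) (hu : ‖u‖ = 1) :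
    (stdGaussian E).map (fun b => inner ℝ b u) = gaussianReal 0 1 := by
  have h := IsGaussian.map_eq_gaussianReal (μ := stdGaussian E) (innerSL ℝ u)
  rw [integral_strongDual_stdGaussian, variance_dual_stdGaussian] at h
  simp [hu] at h
  rw [← h]
  congr 1
  ext b
  simp [real_inner_comm]

lemma aux_law_pair (u w : E) (hu : ‖u‖ = 1) (hw : ‖w‖ = 1) (h : inner ℝ u w = 0) :
    (stdGaussian E).map (fun b => (inner ℝ b u, inner ℝ b w)) =
      (gaussianReal 0 1).prod (gaussianReal 0 1) := by
  have hg : HasGaussianLaw (fun b : E => (inner ℝ u b, inner ℝ w b)) (stdGaussian E) := by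
    have h0 : HasGaussianLaw (fun b : E => b) (stdGaussian E) := IsGaussian.hasGaussianLaw_id
    exact h0.map_fun ((innerSL ℝ u).prod (innerSL ℝ w))
  have hi : IndepFun (fun b : E => inner ℝ u b) (fun b : E => inner ℝ w b) (stdGaussian E) := by
    apply hg.indepFun_of_covariance_eq_zero
    rw [← covarianceBilin_apply_eq_cov IsGaussian.memLp_two_id, covarianceBilin_stdGaussian]
    exact h
  have := (indepFun_iff_map_prod_eq_prod_map_map (by fun_prop) (by fun_prop)).1 hi
  have e1 : (fun b : E => inner ℝ u b) = fun b => inner ℝ b u := funext fun b => real_inner_comm _ _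
  have e2 : (fun b : E => inner ℝ w b) = fun b => inner ℝ b w := funext fun b => real_inner_comm _ _
  have e3 : (fun b : E => (inner ℝ b u, inner ℝ b w)) = fun b => (inner ℝ u b, inner ℝ w b) :=
    funext fun b => Prod.ext (real_inner_comm _ _) (real_inner_comm _ _)
  rw [e3, this, e1, e2, aux_law_inner u hu, aux_law_inner w hw]

end gauss

lemma aux_pdf_le (x : ℝ) : gaussianPDFReal 0 1 x ≤ 1 := by
  unfold gaussianPDFReal
  have h1 : (1:ℝ) ≤ √(2 * Real.pi * (1 : NNReal)) := by
    rw [Real.one_le_sqrt]; have := Real.pi_gt_three; simp; linarith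
  have h2 : Real.exp (-(x - 0) ^ 2 / (2 * (1 : NNReal))) ≤ 1 := by
    rw [Real.exp_le_one_iff]
    have e : (-(x - 0) ^ 2 / (2 * (1 : NNReal)) : ℝ) = -(x ^ 2 / 2) := by simp; ring
    rw [e]; nlinarith [sq_nonneg x]
  calc _ ≤ (1:ℝ) * 1 := by
        gcongr
        exact inv_le_one_of_one_le₀ h1
    _ = 1 := by norm_num

lemma aux_pdf_ge (x : ℝ) (hx : |x| ≤ 1) : 1 / 8 ≤ gaussianPDFReal 0 1 x := by
  unfold gaussianPDFReal
  have h1 : √(2 * Real.pi * (1 : NNReal)) ≤ 4 := by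
    rw [Real.sqrt_le_left (by norm_num)]; have := Real.pi_lt_four; simp; linarith
  have h2 : 1 / 2 ≤ Real.exp (-(x - 0) ^ 2 / (2 * (1 : NNReal))) := by
    have := Real.add_one_le_exp (-(x - 0) ^ 2 / (2 * (1 : NNReal)))
    have h3 : x ^ 2 ≤ 1 := by rw [← sq_abs]; nlinarith [abs_nonneg x]
    refine le_trans ?_ this
    simp; linarith
  have h0 : 0 < √(2 * Real.pi * (1 : NNReal)) := by
    apply Real.sqrt_pos.2; have := Real.pi_pos; simp [this]
  calc (1:ℝ)/8 = 4⁻¹ * (1/2) := by norm_num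
    _ ≤ _ := by gcongr

lemma aux_Icc_le (a b : ℝ) : gaussianReal 0 1 (Set.Icc a b) ≤ ENNReal.ofReal (b - a) := by
  rw [gaussianReal_apply _ one_ne_zero]
  calc ∫⁻ x in Set.Icc a b, gaussianPDF 0 1 x ≤ ∫⁻ x in Set.Icc a b, 1 := by
        apply lintegral_mono
        intro x
        unfold gaussianPDF
        simpa using aux_pdf_le x
    _ = ENNReal.ofReal (b - a) := by simp

lemma aux_Icc_ge (η : ℝ) (h1 : η ≤ 1) :
    η / 4 ≤ (gaussianReal 0 1).real (Set.Icc (-η) η) := by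
  rw [measureReal_def, ← ENNReal.ofReal_le_iff_le_toReal (measure_ne_top _ _),
    gaussianReal_apply _ one_ne_zero]
  calc ENNReal.ofReal (η/4) = ∫⁻ x in Set.Icc (-η) η, ENNReal.ofReal (1/8) := by
        rw [setLIntegral_const, Real.volume_Icc, ← ENNReal.ofReal_mul (by norm_num)]
        congr 1; ring
    _ ≤ ∫⁻ x in Set.Icc (-η) η, gaussianPDF 0 1 x := by
        apply setLIntegral_mono (measurable_gaussianPDF _ _)
        intro x hx
        unfold gaussianPDF
        apply ENNReal.ofReal_le_ofReal
        apply aux_pdf_ge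
        rw [abs_le]; constructor <;> linarith [hx.1, hx.2]

lemma aux_mgf (t : ℝ) (ht : t < 1 / 2) :
    ∫ x, Real.exp (t * x ^ 2) ∂(gaussianReal 0 1) = √((1 - 2 * t)⁻¹) := by
  rw [integral_gaussianReal_eq_integral_smul one_ne_zero]
  have : ∀ x : ℝ, gaussianPDFReal 0 1 x • Real.exp (t * x ^ 2) =
      (√(2 * Real.pi))⁻¹ * Real.exp (-(1/2 - t) * x ^ 2) := by
    intro x
    simp only [gaussianPDFReal, smul_eq_mul, NNReal.coe_one, mul_one, sub_zero]
    rw [mul_assoc, ← Real.exp_add]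
    congr 2; ring
  simp_rw [this]
  rw [integral_const_mul, integral_gaussian, ← Real.sqrt_inv, ← Real.sqrt_mul (by positivity)]
  congr 1
  have := Real.pi_pos
  have h3 : 1/2 - t ≠ 0 := by linarith
  have h4 : 1 - 2 * t ≠ 0 := by linarith
  field_simp

lemma aux_mgf_int (t : ℝ) (ht : t < 1 / 2) :
    Integrable (fun x : ℝ => Real.exp (t * x ^ 2)) (gaussianReal 0 1) := by
  apply Integrable.of_integral_ne_zero
  rw [aux_mgf t ht]
  apply (Real.sqrt_pos.2 _).ne'
  apply inv_pos.2; linarith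

section pi
variable {ι : Type*} [Fintype ι]

lemma aux_mgf_pi (t : ℝ) (ht : t < 1 / 2) :
    Integrable (fun z : ι → ℝ => Real.exp (t * ∑ i, z i ^ 2)) (Measure.pi fun _ => gaussianReal 0 1) ∧
    ∫ z : ι → ℝ, Real.exp (t * ∑ i, z i ^ 2) ∂(Measure.pi fun _ => gaussianReal 0 1) =
      √((1 - 2 * t)⁻¹) ^ Fintype.card ι := by
  have h : ∀ z : ι → ℝ, Real.exp (t * ∑ i, z i ^ 2) = ∏ i, Real.exp (t * z i ^ 2) := by
    intro z; rw [Finset.mul_sum, Real.exp_sum]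
  simp_rw [h]
  constructor
  · exact Integrable.fintype_prod (f := fun _ x => Real.exp (t * x ^ 2)) fun i => aux_mgf_int t ht
  · rw [integral_fintype_prod_eq_prod (f := fun _ x => Real.exp (t * x ^ 2))]
    simp [aux_mgf t ht]

/-- Chernoff. -/
lemma aux_chernoff (t α : ℝ) (ht : t < 1 / 2) :
    (Measure.pi fun _ : ι => gaussianReal 0 1) {z | t * α ≤ t * ∑ i, z i ^ 2} ≤
      ENNReal.ofReal (Real.exp (- (t * α)) * √((1 - 2 * t)⁻¹) ^ Fintype.card ι) := by
  obtain ⟨h1, h2⟩ := aux_mgf_pi (ι := ι) t ht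
  have := mul_meas_ge_le_integral_of_nonneg (Filter.Eventually.of_forall fun z => (Real.exp_pos _).le)
    h1 (Real.exp (t * α))
  rw [h2] at this
  rw [← ENNReal.ofReal_toReal (measure_ne_top _ {z : ι → ℝ | t * α ≤ t * ∑ i, z i ^ 2})]
  apply ENNReal.ofReal_le_ofReal
  simp only [Real.exp_le_exp] at this
  rw [Real.exp_neg, ← div_eq_inv_mul, le_div_iff₀' (Real.exp_pos _)]
  exact this

variable {E : Type*} [NormedAddCommGroup E] [InnerProductSpace ℝ E] [FiniteDimensional ℝ E]
  [MeasurableSpace E] [BorelSpace E]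

lemma aux_chernoff_vec (t α : ℝ) (ht : t < 1 / 2) (u : E) (hu : ‖u‖ = 1) :
    (Measure.pi fun _ : ι => stdGaussian E) {z | t * α ≤ t * ∑ i, (inner ℝ (z i) u) ^ 2} ≤
      ENNReal.ofReal (Real.exp (- (t * α)) * √((1 - 2 * t)⁻¹) ^ Fintype.card ι) := by
  refine le_trans (le_of_eq ?_) (aux_chernoff (ι := ι) t α ht)
  have hm : (Measure.pi fun _ : ι => stdGaussian E).map (fun z i => inner ℝ (z i) u) =
      Measure.pi fun _ : ι => gaussianReal 0 1 := by
    have : ∀ i : ι, SigmaFinite ((stdGaussian E).map (fun b => inner ℝ b u)) := by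
      intro i; rw [aux_law_inner u hu]; infer_instance
    have := Measure.pi_map_pi (μ := fun _ : ι => stdGaussian E) (f := fun _ b => inner ℝ b u)
      (fun i => by fun_prop)
    rw [this]; simp_rw [aux_law_inner u hu]
  rw [← hm, Measure.map_apply (by fun_prop)]
  · rfl
  · apply measurableSet_le <;> fun_prop

end pi


lemma aux_second_moment {Ω X : Type*} [MeasurableSpace Ω] [Fintype X] (μ : Measure Ω)
    [IsProbabilityMeasure μ] (A : X → Set Ω) (hA : ∀ x, MeasurableSet (A x)) (K a : ℝ)
    (hK : 0 < K) (ha : 0 < a) (h1 : ∑ x, μ.real (A x) = a)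
    (h2 : ∑ x, ∑ y, μ.real (A x ∩ A y) ≤ K * a ^ 2) :
    1 / K ≤ μ.real (⋃ x, A x) := by
  classical
  set f : Ω → ℝ := fun ω => ∑ x, (A x).indicator 1 ω with hf
  have hi : ∀ B : Set Ω, MeasurableSet B → Integrable (B.indicator (1 : Ω → ℝ)) μ :=
    fun B hB => (integrable_const (1:ℝ)).indicator hB
  have hf1 : ∫ ω, f ω ∂μ = a := by
    rw [← h1, hf, integral_finsetSum _ fun x _ => hi _ (hA x)]
    refine Finset.sum_congr rfl fun x _ => integral_indicator_one (hA x)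
  have hff : ∀ ω, f ω ^ 2 = ∑ x, ∑ y, (A x ∩ A y).indicator 1 ω := by
    intro ω
    rw [hf, sq, Finset.sum_mul_sum]
    refine Finset.sum_congr rfl fun x _ => Finset.sum_congr rfl fun y _ => ?_
    by_cases h1 : ω ∈ A x <;> by_cases h2 : ω ∈ A y <;> simp [h1, h2]
  have hf2 : ∫ ω, f ω ^ 2 ∂μ = ∑ x, ∑ y, μ.real (A x ∩ A y) := by
    simp_rw [hff]
    rw [integral_finsetSum _ fun x _ => integrable_finsetSum _ fun y _ => hi _ ((hA x).inter (hA y))]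
    refine Finset.sum_congr rfl fun x _ => ?_
    rw [integral_finsetSum _ fun y _ => hi _ ((hA x).inter (hA y))]
    refine Finset.sum_congr rfl fun y _ => integral_indicator_one ((hA x).inter (hA y))
  have hif : Integrable f μ := integrable_finsetSum _ fun x _ => hi _ (hA x)
  have hif2 : Integrable (fun ω => f ω ^ 2) μ := by
    simp_rw [hff]
    exact integrable_finsetSum _ fun x _ => integrable_finsetSum _ fun y _ => hi _ ((hA x).inter (hA y))
  have hU : MeasurableSet (⋃ x, A x) := MeasurableSet.iUnion hA
  set l : ℝ := 1 / (K * a) with hl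
  have key : ∫ ω, (2 * l * f ω - l ^ 2 * f ω ^ 2) ∂μ ≤ ∫ ω, (⋃ x, A x).indicator 1 ω ∂μ := by
    apply integral_mono ((hif.const_mul _).sub (hif2.const_mul _)) (hi _ hU)
    intro ω
    change 2 * l * f ω - l ^ 2 * f ω ^ 2 ≤ _
    by_cases hω : ω ∈ ⋃ x, A x
    · simp only [Set.indicator_of_mem hω, Pi.one_apply]
      nlinarith [sq_nonneg (l * f ω - 1)]
    · have : f ω = 0 := by
        rw [hf]
        apply Finset.sum_eq_zero
        intro x _
        apply Set.indicator_of_notMem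
        intro h; exact hω (Set.mem_iUnion.2 ⟨x, h⟩)
      simp [this, Set.indicator_of_notMem hω]
  rw [integral_indicator_one hU, integral_sub (hif.const_mul _) (hif2.const_mul _),
    integral_const_mul, integral_const_mul, hf1, hf2] at key
  refine le_trans ?_ key
  have e1 : 2 * l * a = 2 / K := by rw [hl]; field_simp
  have e2 : l ^ 2 * (K * a ^ 2) = 1 / K := by rw [hl]; field_simp
  have := mul_le_mul_of_nonneg_left h2 (sq_nonneg l)
  rw [e2] at this
  rw [e1]
  have : 2 / K - 1 / K = 1 / K := by ring
  linarith

section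
variable {E : Type*} [NormedAddCommGroup E] [InnerProductSpace ℝ E] [FiniteDimensional ℝ E]
  [MeasurableSpace E] [BorelSpace E]

lemma aux_single (u : E) (hu : ‖u‖ = 1) (η : ℝ) :
    (stdGaussian E).real {b | |inner ℝ b u| ≤ η} = (gaussianReal 0 1).real (Set.Icc (-η) η) := by
  rw [← aux_law_inner u hu, measureReal_def, measureReal_def,
    Measure.map_apply (by fun_prop) measurableSet_Icc]
  congr 2
  ext b; simp [abs_le]

lemma aux_far (u v : E) (hu : ‖u‖ = 1) (hv : ‖v‖ = 1) (η t : ℝ) (h0 : 0 ≤ η) (ht : 0 < t)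
    (ht1 : t ≤ 1) (h1 : t ≤ ‖u - v‖) (h2 : t ≤ ‖u + v‖) :
    (stdGaussian E).real ({b | |inner ℝ b u| ≤ η} ∩ {b | |inner ℝ b v| ≤ η}) ≤
      (gaussianReal 0 1).real (Set.Icc (-η) η) * (4 * η / t) := by
  set c : ℝ := inner ℝ u v with hc
  have e1 : ‖u - v‖ ^ 2 = 2 - 2 * c := by rw [norm_sub_sq_real, hu, hv]; ring
  have e2 : ‖u + v‖ ^ 2 = 2 + 2 * c := by rw [norm_add_sq_real, hu, hv]; ring
  have e1' : t ^ 2 ≤ 2 - 2 * c := by rw [← e1]; gcongr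
  have e2' : t ^ 2 ≤ 2 + 2 * c := by rw [← e2]; gcongr
  have hs2 : t ^ 2 / 4 ≤ 1 - c ^ 2 := by
    rcases le_total 0 c with h | h <;> nlinarith
  set s : ℝ := √(1 - c ^ 2) with hs
  have hst : t / 2 ≤ s := by
    rw [hs]; apply Real.le_sqrt_of_sq_le; linarith [hs2, (by ring : (t/2)^2 = t^2/4)]
  have hs0 : 0 < s := by linarith
  have hss : s ^ 2 = 1 - c ^ 2 := Real.sq_sqrt (by nlinarith)
  set w : E := s⁻¹ • (v - c • u) with hw
  have huw : inner ℝ u w = 0 := by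
    rw [hw, inner_smul_right, inner_sub_right, inner_smul_right, real_inner_self_eq_norm_sq, hu, ← hc]
    ring
  have hw1 : ‖w‖ = 1 := by
    have : ‖w‖ ^ 2 = 1 := by
      rw [hw, norm_smul, mul_pow, norm_sub_sq_real, inner_smul_right, norm_smul, hu, hv,
        real_inner_comm, ← hc]
      simp only [norm_inv, Real.norm_eq_abs, mul_one, sq_abs, inv_pow, hss]
      rw [inv_mul_eq_one₀ (by rw [← hss]; positivity)]
      ring
    nlinarith [norm_nonneg w]
  have hv' : v = c • u + s • w := by
    rw [hw, smul_smul, mul_inv_cancel₀ hs0.ne']; simp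
  set S : Set (ℝ × ℝ) := {p | |p.1| ≤ η ∧ |c * p.1 + s * p.2| ≤ η} with hS
  have hSm : MeasurableSet S := by
    exact (measurableSet_le (f := fun p : ℝ × ℝ => |p.1|) (g := fun _ => η) (by fun_prop) (by fun_prop)).inter
      (measurableSet_le (f := fun p : ℝ × ℝ => |c * p.1 + s * p.2|) (g := fun _ => η) (by fun_prop) (by fun_prop))
  have hset : ({b : E | |inner ℝ b u| ≤ η} ∩ {b | |inner ℝ b v| ≤ η}) =
      (fun b => (inner ℝ b u, inner ℝ b w)) ⁻¹' S := by
    ext b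
    simp only [hS, Set.mem_inter_iff, Set.mem_ofPred_eq, Set.mem_preimage]
    rw [hv', inner_add_right, inner_smul_right, inner_smul_right]
  have hmain : (stdGaussian E) ({b | |inner ℝ b u| ≤ η} ∩ {b | |inner ℝ b v| ≤ η}) ≤
      (gaussianReal 0 1) (Set.Icc (-η) η) * ENNReal.ofReal (4 * η / t) := by
    rw [hset, ← Measure.map_apply (by fun_prop) hSm, aux_law_pair u w hu hw1 huw,
      Measure.prod_apply hSm]
    calc _ ≤ ∫⁻ x, (Set.Icc (-η) η).indicator (fun _ => ENNReal.ofReal (4 * η / t)) x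
          ∂(gaussianReal 0 1) := by
          apply lintegral_mono
          intro x
          by_cases hx : x ∈ Set.Icc (-η) η
          · simp only [Set.indicator_of_mem hx]
            calc _ ≤ gaussianReal 0 1 (Set.Icc ((-η - c * x) / s) ((η - c * x) / s)) := by
                  apply measure_mono
                  intro y hy
                  have := (abs_le.1 hy.2)
                  simp only at this
                  constructor
                  · rw [div_le_iff₀ hs0]; linarith
                  · rw [le_div_iff₀ hs0]; linarith
              _ ≤ _ := aux_Icc_le _ _
              _ ≤ _ := by
                  apply ENNReal.ofReal_le_ofReal
                  have : (η - c * x) / s - (-η - c * x) / s = 2 * η / s := by ring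
                  rw [this, div_le_div_iff₀ hs0 ht]
                  nlinarith
          · simp only [Set.indicator_of_notMem hx, nonpos_iff_eq_zero]
            have he : Prod.mk x ⁻¹' S = ∅ := by
              ext y
              simp only [Set.mem_preimage, Set.mem_empty_iff_false, iff_false]
              intro hy
              exact hx (abs_le.1 hy.1)
            rw [he, measure_empty]
      _ = _ := by rw [lintegral_indicator_const measurableSet_Icc, mul_comm]
  rw [measureReal_def, measureReal_def]
  have := ENNReal.toReal_mono (ENNReal.mul_ne_top (measure_ne_top _ _) ENNReal.ofReal_ne_top) hmain
  rwa [ENNReal.toReal_mul, ENNReal.toReal_ofReal (by positivity)] at this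

lemma aux_near_count (k : ℕ) (x : Fin k → Bool) :
    ((Finset.univ.filter fun y : Fin k → Bool => 16 * hammingDist x y < k).card : ℝ) ≤
      (4 / 3 : ℝ) ^ k := by
  classical
  have h1 : ∑ y : Fin k → Bool, ((9/10 : ℝ) ^ 16) ^ hammingDist x y = (1 + (9/10 : ℝ) ^ 16) ^ k := by
    have : ∀ y : Fin k → Bool, ((9/10 : ℝ) ^ 16) ^ hammingDist x y =
        ∏ i, (if x i ≠ y i then (9/10 : ℝ) ^ 16 else 1) := by
      intro y
      rw [hammingDist, Finset.prod_ite]; simp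
    simp_rw [this]
    rw [← Fintype.prod_sum (f := fun i b => if x i ≠ b then (9/10 : ℝ) ^ 16 else 1)]
    rw [Finset.prod_congr rfl (g := fun _ => 1 + (9/10 : ℝ) ^ 16)]
    · simp
    · intro i _
      cases x i <;> simp [add_comm]
  have h2 : ((Finset.univ.filter fun y : Fin k → Bool => 16 * hammingDist x y < k).card : ℝ) *
      (9/10) ^ k ≤ (1 + (9/10 : ℝ) ^ 16) ^ k := by
    rw [← h1, ← nsmul_eq_mul, ← Finset.sum_const]
    calc _ ≤ ∑ y ∈ Finset.univ.filter fun y : Fin k → Bool => 16 * hammingDist x y < k,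
          ((9/10 : ℝ) ^ 16) ^ hammingDist x y := by
          apply Finset.sum_le_sum
          intro y hy
          simp only [Finset.mem_filter, Finset.mem_univ, true_and] at hy
          rw [← pow_mul]
          apply pow_le_pow_of_le_one (by norm_num) (by norm_num) hy.le
      _ ≤ _ := Finset.sum_le_sum_of_subset_of_nonneg (Finset.filter_subset _ _)
            fun _ _ _ => by positivity
  have h3 : (1 + (9/10 : ℝ) ^ 16) ^ k ≤ (4/3) ^ k * (9/10) ^ k := by
    rw [← mul_pow]; apply pow_le_pow_left₀ (by positivity); norm_num
  exact le_of_mul_le_mul_right (h2.trans h3) (by positivity)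

lemma aux_hit (k : ℕ) (hk : 12 ≤ k) (u : (Fin k → Bool) → E) (hu : ∀ x, ‖u x‖ = 1) (t : ℝ)
    (ht : 0 < t) (ht1 : t ≤ 1)
    (hfar : ∀ x y, k ≤ 16 * hammingDist x y → t ≤ ‖u x - u y‖ ∧ t ≤ ‖u x + u y‖) :
    1 / (1 + 16 / t) ≤ (stdGaussian E).real {b | ∃ x, |inner ℝ b (u x)| ≤ (3/4 : ℝ) ^ k} := by
  classical
  set η : ℝ := (3/4 : ℝ) ^ k with hη
  have hη0 : 0 < η := by positivity
  have hη1 : η ≤ 1 := pow_le_one₀ (by norm_num) (by norm_num)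
  set q := (gaussianReal 0 1).real (Set.Icc (-η) η) with hq
  have hqη : η / 4 ≤ q := aux_Icc_ge η hη1
  have hq0 : 0 < q := by linarith
  have hU : {b : E | ∃ x, |inner ℝ b (u x)| ≤ η} = ⋃ x, {b | |inner ℝ b (u x)| ≤ η} := by
    ext b; simp
  rw [hU]
  apply aux_second_moment (stdGaussian E) (a := 2 ^ k * q)
  · intro x; apply measurableSet_le <;> fun_prop
  · positivity
  · positivity
  · simp_rw [aux_single _ (hu _)]
    simp [hq]
  · have hx : ∀ x, ∑ y, (stdGaussian E).real
        ({b | |inner ℝ b (u x)| ≤ η} ∩ {b | |inner ℝ b (u y)| ≤ η}) ≤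
        2 ^ k * q ^ 2 * (1 + 16 / t) := by
      intro x
      rw [← Finset.sum_filter_add_sum_filter_not Finset.univ (fun y => 16 * hammingDist x y < k)]
      have hn : ∑ y ∈ Finset.univ.filter (fun y => 16 * hammingDist x y < k), (stdGaussian E).real
          ({b | |inner ℝ b (u x)| ≤ η} ∩ {b | |inner ℝ b (u y)| ≤ η}) ≤ 2 ^ k * q ^ 2 := by
        calc _ ≤ ∑ y ∈ Finset.univ.filter (fun y => 16 * hammingDist x y < k), q := by
              apply Finset.sum_le_sum
              intro y _
              rw [hq, ← aux_single (u x) (hu x)]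
              exact measureReal_mono Set.inter_subset_left
          _ ≤ (4/3) ^ k * q := by
              rw [Finset.sum_const, nsmul_eq_mul]
              exact mul_le_mul_of_nonneg_right (aux_near_count k x) hq0.le
          _ ≤ 2 ^ k * (η / 4) * q := by
              gcongr
              rw [hη]
              have e1 : (2:ℝ) ^ k * ((3/4) ^ k / 4) = (4/3) ^ k * ((9/8) ^ k / 4) := by
                rw [← mul_div_assoc, ← mul_div_assoc, ← mul_pow, ← mul_pow]; norm_num
              rw [e1]
              have e2 : (9/8 : ℝ) ^ 12 ≤ (9/8) ^ k := pow_le_pow_right₀ (by norm_num) hk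
              have e3 : (1:ℝ) ≤ (9/8) ^ k / 4 := by
                rw [le_div_iff₀ (by norm_num)]
                refine le_trans ?_ e2
                norm_num
              exact le_mul_of_one_le_right (by positivity) e3
          _ ≤ 2 ^ k * q * q := by gcongr
          _ = 2 ^ k * q ^ 2 := by ring
      have hf : ∑ y ∈ Finset.univ.filter (fun y => ¬ 16 * hammingDist x y < k), (stdGaussian E).real
          ({b | |inner ℝ b (u x)| ≤ η} ∩ {b | |inner ℝ b (u y)| ≤ η}) ≤ 2 ^ k * (q ^ 2 * (16 / t)) := by
        calc _ ≤ ∑ y ∈ Finset.univ.filter (fun y => ¬ 16 * hammingDist x y < k), q ^ 2 * (16 / t) := by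
              apply Finset.sum_le_sum
              intro y hy
              simp only [Finset.mem_filter, Finset.mem_univ, true_and, not_lt] at hy
              obtain ⟨a1, a2⟩ := hfar x y hy
              refine (aux_far _ _ (hu x) (hu y) η t hη0.le ht ht1 a1 a2).trans ?_
              rw [← hq, sq, mul_assoc]
              have : 4 * η / t ≤ q * (16 / t) := by
                rw [← mul_div_assoc]
                apply div_le_div_of_nonneg_right _ ht.le
                linarith
              exact mul_le_mul_of_nonneg_left this hq0.le
          _ ≤ _ := by
              rw [Finset.sum_const, nsmul_eq_mul]
              gcongr
              have := Finset.card_filter_le (Finset.univ : Finset (Fin k → Bool))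
                (fun y => ¬ 16 * hammingDist x y < k)
              have h2 : (Finset.univ : Finset (Fin k → Bool)).card = 2 ^ k := by simp
              rw [h2] at this
              exact_mod_cast this
      linarith [hn, hf, (by ring : 2 ^ k * q ^ 2 * (1 + 16 / t) = 2 ^ k * q ^ 2 + 2 ^ k * (q ^ 2 * (16 / t)))]
    calc _ ≤ ∑ x : Fin k → Bool, 2 ^ k * q ^ 2 * (1 + 16 / t) := Finset.sum_le_sum fun x _ => hx x
      _ = (1 + 16 / t) * (2 ^ k * q) ^ 2 := by
          simp; ring
end

lemma aux_sigma_le_of {d : ℕ} (M : Matrix (Fin d) (Fin d) ℝ) (x : EuclideanSpace ℝ (Fin d))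
    (hx : x ≠ 0) (η : ℝ) (h : ‖WithLp.toLp 2 (M.mulVec x.ofLp)‖ ≤ η * ‖x‖) : sigmaMin M ≤ η := by
  have hx0 : 0 < ‖x‖ := norm_pos_iff.2 hx
  refine le_trans (csInf_le ⟨0, ?_⟩ ⟨‖x‖⁻¹ • x, ?_, rfl⟩) ?_
  · rintro r ⟨y, _, rfl⟩; positivity
  · rw [norm_smul, norm_inv, norm_norm, inv_mul_cancel₀ hx0.ne']
  · have : (EuclideanSpace.equiv (Fin d) ℝ).symm
        (M.mulVec ((EuclideanSpace.equiv (Fin d) ℝ) (‖x‖⁻¹ • x))) =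
        ‖x‖⁻¹ • WithLp.toLp 2 (M.mulVec x.ofLp) := by
      rw [map_smul, Matrix.mulVec_smul, map_smul]; rfl
    rw [this, norm_smul, norm_inv, norm_norm, inv_mul_le_iff₀ hx0]
    linarith

lemma aux_sigma {d : ℕ} (M : Matrix (Fin d) (Fin d) ℝ) (u : EuclideanSpace ℝ (Fin d))
    (hu : ‖u‖ = 1) (η : ℝ) (hη : 0 ≤ η) (h : ∑ j, (∑ i, M i j * u i) ^ 2 ≤ η ^ 2) :
    sigmaMin M ≤ η := by
  by_cases hdet : M.det = 0
  · obtain ⟨v, hv, hv0⟩ := Matrix.exists_mulVec_eq_zero_iff.2 hdet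
    apply aux_sigma_le_of M (WithLp.toLp 2 v) (by simpa using hv)
    simp [hv0]; positivity
  · have hU : IsUnit M.det := isUnit_iff_ne_zero.2 hdet
    set y : EuclideanSpace ℝ (Fin d) := WithLp.toLp 2 (M⁻¹.mulVec u.ofLp) with hy
    have hMy : M.mulVec y.ofLp = u.ofLp := by
      simp [hy, Matrix.mulVec_mulVec, Matrix.mul_nonsing_inv _ hU]
    set w : EuclideanSpace ℝ (Fin d) := WithLp.toLp 2 (fun j => ∑ i, M i j * u i) with hw
    have hwn : ‖w‖ ≤ η := by
      rw [EuclideanSpace.norm_eq]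
      apply Real.sqrt_le_iff.2 ⟨hη, _⟩
      simpa [hw] using h
    have h1 : inner ℝ w y = 1 := by
      have : inner ℝ w y = ∑ i, (M.mulVec y.ofLp) i * u i := by
        simp only [PiLp.inner_apply, hw, Matrix.mulVec, dotProduct, RCLike.inner_apply, conj_trivial,
          Finset.sum_mul, Finset.mul_sum]
        rw [Finset.sum_comm]
        refine Finset.sum_congr rfl fun i _ => Finset.sum_congr rfl fun j _ => by ring
      rw [this, hMy]
      have h2 := EuclideanSpace.real_norm_sq_eq u
      rw [hu] at h2
      rw [← one_pow 2, h2]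
      refine Finset.sum_congr rfl fun i _ => by ring
    have h3 : 1 ≤ η * ‖y‖ := by
      rw [← h1]
      exact (real_inner_le_norm _ _).trans (by gcongr)
    apply aux_sigma_le_of M y
    · rintro h0; rw [h0] at h3; simp at h3; linarith
    · rw [hMy]; change ‖u‖ ≤ _; rw [hu]; exact h3

/-- cofactor vector -/
noncomputable def auxCof {m : ℕ} (T : Fin m → EuclideanSpace ℝ (Fin (m + 1))) :
    EuclideanSpace ℝ (Fin (m + 1)) :=
  WithLp.toLp 2 fun i => (-1) ^ (i : ℕ) *
    (Matrix.of fun (a b : Fin m) => T a (i.succAbove b)).det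

lemma auxCof_inner {m : ℕ} (T : Fin m → EuclideanSpace ℝ (Fin (m + 1)))
    (b : EuclideanSpace ℝ (Fin (m + 1))) :
    inner ℝ b (auxCof T) = (Matrix.of (Fin.cons b.ofLp (fun j => (T j).ofLp)) :
      Matrix (Fin (m+1)) (Fin (m+1)) ℝ).det := by
  rw [Matrix.det_succ_row_zero]
  simp only [PiLp.inner_apply, auxCof, RCLike.inner_apply, conj_trivial]
  refine Finset.sum_congr rfl fun i _ => ?_
  have : (Matrix.of (Fin.cons b.ofLp (fun j => (T j).ofLp)) :
      Matrix (Fin (m+1)) (Fin (m+1)) ℝ).submatrix Fin.succ i.succAbove =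
      Matrix.of fun (a b : Fin m) => T a (i.succAbove b) := by
    ext a c; simp
  rw [this]; simp; ring

lemma auxCof_measurable {m : ℕ} :
    Measurable (auxCof : (Fin m → EuclideanSpace ℝ (Fin (m + 1))) → _) := by
  unfold auxCof
  apply (WithLp.measurable_toLp _ _).comp
  apply measurable_pi_lambda
  intro i
  simp only [Matrix.det_apply, Matrix.of_apply]
  fun_prop

lemma aux_normal (m : ℕ) : ∃ u : (Fin m → EuclideanSpace ℝ (Fin (m + 1))) →
    EuclideanSpace ℝ (Fin (m + 1)), Measurable u ∧ (∀ T, ‖u T‖ = 1) ∧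
    ∀ T, (∀ j, inner ℝ (T j) (u T) = 0) ∨
      ∀ b, ∃ v, ‖v‖ = 1 ∧ inner ℝ b v = 0 ∧ ∀ j, inner ℝ (T j) v = 0 := by
  classical
  refine ⟨fun T => if auxCof T = 0 then EuclideanSpace.single 0 1 else ‖auxCof T‖⁻¹ • auxCof T,
    ?_, ?_, ?_⟩
  · apply Measurable.ite
    · exact auxCof_measurable (measurableSet_singleton 0)
    · fun_prop
    · exact auxCof_measurable.norm.inv.smul auxCof_measurable
  · intro T
    simp only
    split_ifs with h
    · simp
    · rw [norm_smul, norm_inv, norm_norm, inv_mul_cancel₀ (norm_ne_zero_iff.2 h)]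
  · intro T
    by_cases h : auxCof T = 0
    · right
      intro b
      have h0 := auxCof_inner T b
      rw [h, inner_zero_right] at h0
      obtain ⟨v, hv, hv0⟩ := Matrix.exists_mulVec_eq_zero_iff.2 h0.symm
      set y : EuclideanSpace ℝ (Fin (m+1)) := WithLp.toLp 2 v with hy
      have hy0 : y ≠ 0 := by simpa [hy] using hv
      have hin : ∀ a : EuclideanSpace ℝ (Fin (m+1)), inner ℝ a y = dotProduct a.ofLp v := by
        intro a
        simp only [PiLp.inner_apply, hy, dotProduct, RCLike.inner_apply, conj_trivial]
        refine Finset.sum_congr rfl fun i _ => by ring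
      refine ⟨‖y‖⁻¹ • y, ?_, ?_, ?_⟩
      · rw [norm_smul, norm_inv, norm_norm, inv_mul_cancel₀ (norm_ne_zero_iff.2 hy0)]
      · rw [inner_smul_right, hin]
        have := congrFun hv0 0
        simp only [Matrix.mulVec, Matrix.of_apply, Pi.zero_apply] at this
        have h2 : dotProduct b.ofLp v = 0 := this
        rw [h2, mul_zero]
      · intro j
        rw [inner_smul_right, hin]
        have := congrFun hv0 j.succ
        have h2 : dotProduct (T j).ofLp v = 0 := this
        rw [h2, mul_zero]
    · left
      intro j
      simp only [if_neg h]
      rw [inner_smul_right, auxCof_inner, Matrix.det_zero_of_row_eq (i := 0) (j := j.succ)]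
      · simp
      · exact (Fin.succ_ne_zero j).symm
      · rfl

section laws
variable {E : Type*} [MeasurableSpace E]

lemma aux_law_inj {J ι : Type*} [Fintype J] [Fintype ι] (P : Measure E) [IsProbabilityMeasure P]
    (f : ι → J) (hf : Function.Injective f) :
    (Measure.pi fun _ : J => P).map (fun ω i => ω (f i)) = Measure.pi fun _ : ι => P := by
  have h := iIndepFun_pi (μ := fun _ : J => P) (X := fun _ x => x) (fun _ => aemeasurable_id)
  have h2 := h.precomp hf
  rw [iIndepFun_iff_map_fun_eq_pi_map (fun i => (measurable_pi_apply (f i)).aemeasurable)] at h2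
  rw [h2]
  congr 1
  ext1 i
  exact (measurePreserving_eval (fun _ : J => P) (f i)).map_eq

lemma aux_law_two {J ι κ : Type*} [Fintype J] [Fintype ι] [Fintype κ] (P : Measure E)
    [IsProbabilityMeasure P]
    (f : ι → J) (g : κ → J) (hf : Function.Injective (Sum.elim f g)) :
    (Measure.pi fun _ : J => P).map (fun ω => ((fun i => ω (f i)), (fun i => ω (g i)))) =
      (Measure.pi fun _ : ι => P).prod (Measure.pi fun _ : κ => P) := by
  have h1 := aux_law_inj P _ hf
  have h2 := (measurePreserving_sumPiEquivProdPi (fun _ : ι ⊕ κ => P)).map_eq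
  rw [← h1, Measure.map_map (by fun_prop) (by fun_prop)] at h2
  exact h2

/-- Fubini bound. -/
lemma aux_fubini {J ι κ : Type*} [Fintype J] [Fintype ι] [Fintype κ] (P : Measure E)
    [IsProbabilityMeasure P]
    (f : ι → J) (g : κ → J) (hf : Function.Injective (Sum.elim f g))
    (G : Set (ι → E)) (hG : MeasurableSet G)
    (S : Set ((ι → E) × (κ → E))) (hS : MeasurableSet S) (c : ENNReal)
    (h : ∀ y ∈ G, (Measure.pi fun _ : κ => P) {z | (y, z) ∈ S} ≤ c) :
    (Measure.pi fun _ : J => P) {ω | (fun i => ω (f i)) ∈ G ∧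
      ((fun i => ω (f i)), (fun i => ω (g i))) ∈ S} ≤ c := by
  have hm : MeasurableSet ((Prod.fst ⁻¹' G) ∩ S) := (measurable_fst hG).inter hS
  have e : {ω : J → E | (fun i => ω (f i)) ∈ G ∧ ((fun i => ω (f i)), (fun i => ω (g i))) ∈ S} =
    (fun ω => ((fun i => ω (f i)), (fun i => ω (g i)))) ⁻¹' ((Prod.fst ⁻¹' G) ∩ S) := rfl
  rw [e, ← Measure.map_apply (by fun_prop) hm, aux_law_two P f g hf, Measure.prod_apply hm]
  calc _ ≤ ∫⁻ y, c ∂(Measure.pi fun _ : ι => P) := by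
        apply lintegral_mono
        intro y
        by_cases hy : y ∈ G
        · exact (measure_mono fun z hz => hz.2).trans (h y hy)
        · have : Prod.mk y ⁻¹' (Prod.fst ⁻¹' G ∩ S) = ∅ := by
            ext z; simp [hy]
          simp [this]
    _ = c := by simp

end laws

lemma aux_transpose (d n : ℕ) :
    (Measure.pi fun _ : Fin d => Measure.pi fun _ : Fin n => gaussianReal 0 1).map
      (fun A j => (WithLp.toLp 2 (fun i => A i j) : EuclideanSpace ℝ (Fin d))) =
    Measure.pi fun _ : Fin n => stdGaussian (EuclideanSpace ℝ (Fin d)) := by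
  have h0 : (Measure.pi fun _ : Fin d => Measure.pi fun _ : Fin n => gaussianReal 0 1).map
      (fun A (p : Fin n × Fin d) => A p.2 p.1) = Measure.pi fun p : Fin n × Fin d => gaussianReal 0 1 := by
    have h := Measure.infinitePi_map_curry_symm (fun (_ : Fin d) (_ : Fin n) => gaussianReal 0 1)
    simp_rw [Measure.infinitePi_eq_pi] at h
    have h2 := aux_law_inj (gaussianReal 0 1) (fun p : Fin n × Fin d => (p.2, p.1))
      (fun p q hpq => by simp at hpq; ext <;> simp [hpq])
    rw [← h, Measure.map_map (by fun_prop) (by fun_prop)] at h2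
    exact h2
  have h1 : (Measure.pi fun p : Fin n × Fin d => gaussianReal 0 1).map
      (MeasurableEquiv.curry (Fin n) (Fin d) ℝ) =
      Measure.pi fun _ : Fin n => Measure.pi fun _ : Fin d => gaussianReal 0 1 := by
    have h := Measure.infinitePi_map_curry (fun (_ : Fin n) (_ : Fin d) => gaussianReal 0 1)
    simp_rw [Measure.infinitePi_eq_pi] at h
    exact h
  rw [← h0, Measure.map_map (by fun_prop) (by fun_prop)] at h1
  have h3 := Measure.pi_map_pi (μ := fun _ : Fin n => Measure.pi fun _ : Fin d => gaussianReal 0 1)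
    (f := fun _ x => (WithLp.toLp 2 x : EuclideanSpace ℝ (Fin d))) (fun i => by fun_prop)
  rw [← h1, Measure.map_map (by fun_prop) (by fun_prop)] at h3
  simp_rw [map_pi_eq_stdGaussian] at h3
  exact h3

section opnorm
variable {E : Type*} [NormedAddCommGroup E] [InnerProductSpace ℝ E] [FiniteDimensional ℝ E]

lemma aux_net : ∃ s : Finset E, s.card ≤ 5 ^ Module.finrank ℝ E ∧ (∀ y ∈ s, ‖y‖ ≤ 2) ∧
    ∀ v : E, ‖v‖ ≤ 2 → ∃ y ∈ s, ‖v - y‖ ≤ 1 := by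
  classical
  let Q : Finset E → Prop := fun s => (∀ c ∈ s, ‖c‖ ≤ 2) ∧ ∀ c ∈ s, ∀ d ∈ s, c ≠ d → 1 ≤ ‖c - d‖
  have hb : ∀ s, Q s → s.card ≤ 5 ^ Module.finrank ℝ E := fun s hs =>
    Besicovitch.card_le_of_separated s hs.1 hs.2
  let p : ℕ → Prop := fun n => ∃ s, Q s ∧ s.card = n
  have hp0 : p 0 := ⟨∅, by simp [Q], by simp⟩
  obtain ⟨s, hs, hc⟩ : p (Nat.findGreatest p (5 ^ Module.finrank ℝ E)) :=
    Nat.findGreatest_spec (Nat.zero_le _) hp0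
  refine ⟨s, hb s hs, hs.1, ?_⟩
  intro v hv
  by_contra! hcon
  have hvs : v ∉ s := fun h => by have := hcon v h; simp at this; linarith
  have hQ : Q (insert v s) := by
    refine ⟨?_, ?_⟩
    · intro c hc
      rcases Finset.mem_insert.1 hc with rfl | h
      · exact hv
      · exact hs.1 c h
    · intro c hc d hd hcd
      rcases Finset.mem_insert.1 hc with rfl | h <;> rcases Finset.mem_insert.1 hd with rfl | h'
      · exact absurd rfl hcd
      · exact (hcon d h').le
      · rw [norm_sub_rev]; exact (hcon c h).le
      · exact hs.2 c h d h' hcd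
  have h1 := hb _ hQ
  have h2 := Nat.le_findGreatest (P := p) h1 ⟨_, hQ, rfl⟩
  rw [Finset.card_insert_of_notMem hvs] at h2
  omega

lemma aux_opnorm {ι : Type*} [Fintype ι] (s : Finset E) 
    (hs : ∀ v : E, ‖v‖ ≤ 2 → ∃ y ∈ s, ‖v - y‖ ≤ 1) (a : ι → E) (Y : ℝ) (hY : 0 ≤ Y)
    (h : ∀ y ∈ s, ∑ i, (inner ℝ (a i) y)^2 ≤ Y^2) (v : E) :
    ∑ i, (inner ℝ (a i) v)^2 ≤ Y^2 * ‖v‖^2 := by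
  let L0 : E →ₗ[ℝ] EuclideanSpace ℝ ι :=
    (WithLp.linearEquiv 2 ℝ (ι → ℝ)).symm.toLinearMap ∘ₗ LinearMap.pi (fun i => (innerSL ℝ (a i)).toLinearMap)
  let L : E →L[ℝ] EuclideanSpace ℝ ι := LinearMap.toContinuousLinearMap L0
  have hL : ∀ v, ‖L v‖^2 = ∑ i, (inner ℝ (a i) v)^2 := by
    intro v
    rw [EuclideanSpace.norm_sq_eq]
    simp [L, L0]
  have hy : ∀ y ∈ s, ‖L y‖ ≤ Y := fun y hy => by
    apply abs_le_of_sq_le_sq' _ hY |>.2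
    rw [hL]; exact h y hy
  have hM : ‖L‖ ≤ (Y + ‖L‖)/2 := by
    apply L.opNorm_le_bound (by positivity)
    intro v
    by_cases hv : v = 0
    · simp [hv]
    have hv' : 0 < ‖v‖ := norm_pos_iff.2 hv
    obtain ⟨y, hys, hvy⟩ := hs ((2 * ‖v‖⁻¹) • v) (by
      rw [norm_smul, norm_mul, norm_inv, norm_norm, mul_assoc, inv_mul_cancel₀ hv'.ne']; simp)
    have h1 : ‖L ((2 * ‖v‖⁻¹) • v)‖ ≤ Y + ‖L‖ := by
      calc _ = ‖L y + L ((2 * ‖v‖⁻¹) • v - y)‖ := by rw [← map_add]; congr 2; abel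
        _ ≤ ‖L y‖ + ‖L‖ * ‖(2 * ‖v‖⁻¹) • v - y‖ := (norm_add_le _ _).trans (by gcongr; exact L.le_opNorm _)
        _ ≤ Y + ‖L‖ * 1 := by gcongr; exact hy y hys
        _ = _ := by ring
    rw [map_smul, norm_smul, norm_mul, norm_inv, norm_norm] at h1
    simp only [Real.norm_ofNat] at h1
    have h2 : 2 * ‖v‖⁻¹ * ‖L v‖ * ‖v‖ ≤ (Y + ‖L‖) * ‖v‖ := by gcongr
    have h3 : 2 * ‖v‖⁻¹ * ‖L v‖ * ‖v‖ = 2 * ‖L v‖ := by field_simp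
    linarith
  have hM' : ‖L‖ ≤ Y := by linarith
  rw [← hL, ← mul_pow]
  gcongr
  exact (L.le_opNorm v).trans (by gcongr)

variable [MeasurableSpace E] [BorelSpace E]

lemma aux_bad1 {ι : Type*} [Fintype ι] (hι : Fintype.card ι ≤ 2 * Module.finrank ℝ E) :
    (Measure.pi fun _ : ι => stdGaussian E) {z | ∃ v : E, 64 * (Module.finrank ℝ E : ℝ) * ‖v‖^2 <
      ∑ i, (inner ℝ (z i) v)^2} ≤ ENNReal.ofReal ((1/5 : ℝ) ^ Module.finrank ℝ E) := by
  obtain ⟨s, hcard, hs2, hs⟩ := aux_net (E := E)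
  set N := Module.finrank ℝ E with hN
  have hone : ∀ y ∈ s, (Measure.pi fun _ : ι => stdGaussian E)
      {z | 64 * (N:ℝ) < ∑ i, (inner ℝ (z i) y)^2} ≤ ENNReal.ofReal (Real.exp (-(4 * N)) * 2 ^ N) := by
    intro y hy
    by_cases hy0 : y = 0
    · have : {z : ι → E | 64 * (N:ℝ) < ∑ i, (inner ℝ (z i) y)^2} = ∅ := by
        ext z
        simp only [hy0, Set.mem_setOf_eq, Set.mem_empty_iff_false, iff_false, not_lt, inner_zero_right]
        simp
      rw [this]; simp
    have hy' : 0 < ‖y‖ := norm_pos_iff.2 hy0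
    have hu : ‖‖y‖⁻¹ • y‖ = 1 := by
      rw [norm_smul, norm_inv, norm_norm, inv_mul_cancel₀ hy'.ne']
    have hc := aux_chernoff_vec (ι := ι) (1/4) (16 * N) (by norm_num) _ hu
    refine (measure_mono ?_).trans (hc.trans ?_)
    · intro z hz
      simp only [Set.mem_setOf_eq] at hz ⊢
      gcongr
      simp_rw [inner_smul_right, mul_pow, ← Finset.mul_sum]
      have h1 : (1/4:ℝ) ≤ (‖y‖⁻¹)^2 := by
        have := hs2 y hy
        rw [inv_pow, one_div]
        gcongr
        nlinarith
      calc (16 * N : ℝ) = 1/4 * (64 * N) := by ring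
        _ ≤ (‖y‖⁻¹)^2 * ∑ i, (inner ℝ (z i) y)^2 := by
          apply mul_le_mul h1 hz.le (by positivity) (by positivity)
    · apply ENNReal.ofReal_le_ofReal
      have h2 : √((1 - 2 * (1/4:ℝ))⁻¹) = √2 := by norm_num
      rw [h2]
      have h3 : √2 ^ Fintype.card ι ≤ (2:ℝ)^N := by
        calc √2 ^ Fintype.card ι ≤ √2 ^ (2 * N) := 
              pow_le_pow_right₀ (by rw [Real.one_le_sqrt]; norm_num) hι
          _ = 2 ^ N := by rw [pow_mul, Real.sq_sqrt (by norm_num)]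
      have h4 : (1/4 * (16 * N) : ℝ) = 4 * N := by ring
      rw [h4]
      gcongr
  have hsub : {z : ι → E | ∃ v : E, 64 * (N : ℝ) * ‖v‖^2 < ∑ i, (inner ℝ (z i) v)^2} ⊆
      ⋃ y ∈ s, {z | 64 * (N:ℝ) < ∑ i, (inner ℝ (z i) y)^2} := by
    rintro z ⟨v, hv⟩
    by_contra hcon
    simp only [Set.mem_iUnion, Set.mem_setOf_eq, exists_prop, not_exists, not_and, not_lt] at hcon
    have h0 : (0:ℝ) ≤ 64 * N := by positivity
    have := aux_opnorm s hs z (√(64 * N)) (by positivity) (fun y hy => by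
      rw [Real.sq_sqrt h0]; exact hcon y hy) v
    rw [Real.sq_sqrt h0] at this
    linarith
  refine (measure_mono hsub).trans ((measure_biUnion_finset_le _ _).trans ((Finset.sum_le_sum hone).trans ?_))
  rw [Finset.sum_const, nsmul_eq_mul, ← ENNReal.ofReal_natCast, ← ENNReal.ofReal_mul (by positivity)]
  apply ENNReal.ofReal_le_ofReal
  have h5 : (s.card : ℝ) ≤ 5 ^ N := by exact_mod_cast hcard
  have he : Real.exp (-(4 * N)) ≤ (1/50) ^ N := by
    have : Real.exp (-(4 * N)) = (Real.exp (-4)) ^ N := by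
      rw [← Real.exp_nat_mul]; congr 1; ring
    rw [this]
    gcongr
    rw [Real.exp_neg, one_div]
    gcongr
    have : Real.exp 4 = (Real.exp 1) ^ 4 := by rw [← Real.exp_nat_mul]; norm_num
    rw [this]
    have h := Real.exp_one_gt_d9
    calc (50:ℝ) ≤ 2.7 ^ 4 := by norm_num
      _ ≤ _ := by gcongr; linarith
  calc (s.card : ℝ) * (Real.exp (-(4 * N)) * 2 ^ N) ≤ 5 ^ N * ((1/50)^N * 2 ^ N) := by gcongr
    _ = (1/5)^N := by rw [← mul_pow, ← mul_pow]; norm_num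
end opnorm

def auxTau (m k : ℕ) (x : Fin k → Bool) : Fin (m + k) → Fin m ⊕ Fin k × Bool :=
  Fin.addCases Sum.inl (fun i => Sum.inr (i, x i))

lemma auxTau_natAdd (m k : ℕ) (x : Fin k → Bool) (i : Fin k) :
    auxTau m k x (Fin.natAdd m i) = Sum.inr (i, x i) := by
  simp [auxTau]

lemma auxTau_castAdd (m k : ℕ) (x : Fin k → Bool) (i : Fin m) :
    auxTau m k x (Fin.castAdd k i) = Sum.inl i := by
  simp [auxTau]

lemma auxTau_inj (m k : ℕ) (x : Fin k → Bool) : Function.Injective (auxTau m k x) := by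
  intro a b
  refine Fin.addCases (fun i => ?_) (fun i => ?_) a <;>
  refine Fin.addCases (fun j => ?_) (fun j => ?_) b <;>
  simp only [auxTau_natAdd, auxTau_castAdd, Sum.inl.injEq, Sum.inr.injEq, reduceCtorEq,
    Prod.mk.injEq, false_imp_iff]
  · rintro rfl; rfl
  · rintro ⟨rfl, -⟩; rfl

section phase
variable {E : Type*} [NormedAddCommGroup E] [InnerProductSpace ℝ E] [FiniteDimensional ℝ E]
  [MeasurableSpace E] [BorelSpace E]

lemma aux_bad2 (m k : ℕ) (u : (Fin (m + k) → E) → E) (hu : Measurable u) (hu1 : ∀ T, ‖u T‖ = 1)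
    (x y : Fin k → Bool) (lam α : ℝ) (hl : 0 ≤ lam) :
    (Measure.pi fun _ : Fin m ⊕ Fin k × Bool => stdGaussian E)
      {ω | ∑ i : {i // x i ≠ y i}, (inner ℝ (ω (Sum.inr (i.1, y i.1)))
        (u (fun j => ω (auxTau m k x j))))^2 ≤ α} ≤
      ENNReal.ofReal (Real.exp (lam * α) * √((1 + 2 * lam)⁻¹) ^ (hammingDist x y)) := by
  have hg : Function.Injective (fun i : {i // x i ≠ y i} => 
      (Sum.inr (i.1, y i.1) : Fin m ⊕ Fin k × Bool)) := by
    intro i j h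
    simp only [Sum.inr.injEq, Prod.mk.injEq] at h
    exact Subtype.ext h.1
  have hinj := (auxTau_inj m k x).sumElim hg (by
    intro a b
    refine Fin.addCases (fun i => ?_) (fun i => ?_) a
    · simp [auxTau_castAdd]
    · simp only [auxTau_natAdd, ne_eq, Sum.inr.injEq, Prod.mk.injEq, not_and]
      rintro rfl
      exact b.2)
  have hcard : Fintype.card {i // x i ≠ y i} = hammingDist x y := by
    rw [Fintype.card_subtype]; rfl
  have hS : MeasurableSet {p : (Fin (m+k) → E) × ({i // x i ≠ y i} → E) |
      ∑ i, (inner ℝ (p.2 i) (u p.1))^2 ≤ α} := by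
    apply measurableSet_le _ measurable_const
    apply Finset.measurable_sum
    intro i _
    have h1 : Measurable fun p : (Fin (m+k) → E) × ({i // x i ≠ y i} → E) => p.2 i := by fun_prop
    have h2 : Measurable fun p : (Fin (m+k) → E) × ({i // x i ≠ y i} → E) => u p.1 :=
      hu.comp measurable_fst
    exact (h1.inner h2).pow_const 2
  have := aux_fubini (stdGaussian E) _ _ hinj Set.univ MeasurableSet.univ _ hS 
    (ENNReal.ofReal (Real.exp (lam * α) * √((1 + 2 * lam)⁻¹) ^ (hammingDist x y))) (by
      intro T _
      have h := aux_chernoff_vec (ι := {i // x i ≠ y i}) (-lam) α (by linarith) (u T) (hu1 T)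
      have e1 : -(-lam * α) = lam * α := by ring
      have e2 : 1 - 2 * -lam = 1 + 2 * lam := by ring
      rw [hcard, e1, e2] at h
      refine (measure_mono ?_).trans h
      · intro z hz
        have hz' : ∑ i, (inner ℝ (z i) (u T))^2 ≤ α := hz
        change -lam * α ≤ -lam * ∑ i, (inner ℝ (z i) (u T))^2
        nlinarith)
  refine (measure_mono ?_).trans this
  intro ω hω
  exact ⟨Set.mem_univ _, hω⟩

lemma aux_phase1 (m k : ℕ) (hd : Module.finrank ℝ E = m + k + 1) (K : ℝ) (hK : (m + k + 1 : ℝ) ≤ K * k)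
    (u : (Fin (m + k) → E) → E) (hu : Measurable u) (hu1 : ∀ T, ‖u T‖ = 1)
    (t : ℝ) (ht : 0 < t) (htK : 32 * ((4:ℝ)^64 - 1) * t^2 * K ≤ 1) :
    (Measure.pi fun _ : Fin m ⊕ Fin k × Bool => stdGaussian E)
      {ω | (∀ x j, inner ℝ (ω (auxTau m k x j)) (u (fun j => ω (auxTau m k x j))) = 0) ∧
        ¬ ∀ x y, k ≤ 16 * hammingDist x y →
          t ≤ ‖u (fun j => ω (auxTau m k x j)) - u (fun j => ω (auxTau m k y j))‖ ∧
          t ≤ ‖u (fun j => ω (auxTau m k x j)) + u (fun j => ω (auxTau m k y j))‖} ≤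
      ENNReal.ofReal ((1/5:ℝ)^(m+k+1)) + ENNReal.ofReal ((Real.exp 1 / 4)^k) := by
  set ν := (Measure.pi fun _ : Fin m ⊕ Fin k × Bool => stdGaussian E) with hν
  set B1 : Set (Fin m ⊕ Fin k × Bool → E) := {ω | ∃ v : E, 64 * (m+k+1:ℝ) * ‖v‖^2 <
      ∑ p : Fin k × Bool, (inner ℝ (ω (Sum.inr p)) v)^2} with hB1
  set B2 : (Fin k → Bool) × (Fin k → Bool) → Set (Fin m ⊕ Fin k × Bool → E) := fun p =>
    {ω | k ≤ 16 * hammingDist p.1 p.2 ∧ ∑ i : {i // p.1 i ≠ p.2 i}, (inner ℝ (ω (Sum.inr (i.1, p.2 i.1)))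
        (u (fun j => ω (auxTau m k p.1 j))))^2 ≤ 64 * (m+k+1) * t^2} with hB2
  have h1 : ν B1 ≤ ENNReal.ofReal ((1/5:ℝ)^(m+k+1)) := by
    have h := aux_bad1 (E := E) (ι := Fin k × Bool) (by simp [hd]; omega)
    rw [hd, ← aux_law_inj (stdGaussian E) (Sum.inr : Fin k × Bool → Fin m ⊕ Fin k × Bool) 
      Sum.inr_injective] at h
    refine le_trans ?_ ((Measure.le_map_apply (measurable_pi_lambda _ fun i => measurable_pi_apply _).aemeasurable _).trans h)
    apply measure_mono
    rintro ω ⟨v, hv⟩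
    refine ⟨v, ?_⟩
    push_cast
    exact hv
  have h2 : ∀ p, ν (B2 p) ≤ ENNReal.ofReal (Real.exp 1 ^ k * (1/16)^k) := by
    intro p
    by_cases hp : k ≤ 16 * hammingDist p.1 p.2
    · refine (measure_mono fun ω hω => hω.2).trans ((aux_bad2 m k u hu hu1 p.1 p.2 (((4:ℝ)^64-1)/2) _
        (by norm_num)).trans ?_)
      apply ENNReal.ofReal_le_ofReal
      have e1 : √((1 + 2 * (((4:ℝ)^64-1)/2))⁻¹) = (1/4)^32 := by
        rw [Real.sqrt_eq_iff_mul_self_eq_of_pos (by positivity)]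
        norm_num
      rw [e1, ← pow_mul, ← Real.exp_nat_mul, mul_one]
      gcongr
      · calc ((4:ℝ)^64-1)/2 * (64 * (m+k+1) * t^2) = 32 * ((4:ℝ)^64 - 1) * t^2 * (m+k+1) := by ring
          _ ≤ 32 * ((4:ℝ)^64 - 1) * t^2 * (K * k) := by
            apply mul_le_mul_of_nonneg_left hK
            have : (0:ℝ) ≤ 4^64 - 1 := by norm_num
            positivity
          _ = (32 * ((4:ℝ)^64 - 1) * t^2 * K) * k := by ring
          _ ≤ 1 * k := by gcongr
          _ = k := by ring
      · calc (1/4:ℝ)^(32 * hammingDist p.1 p.2) ≤ (1/4)^(2 * k) := 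
              pow_le_pow_of_le_one (by norm_num) (by norm_num) (by omega)
          _ = (1/16)^k := by rw [pow_mul]; norm_num
    · have : B2 p = ∅ := by
        ext ω; simp only [Set.mem_empty_iff_false, iff_false]; exact fun h => hp h.1
      rw [this]; simp
  have h3 : ν (⋃ p, B2 p) ≤ ENNReal.ofReal ((Real.exp 1 / 4)^k) := by
    refine (measure_iUnion_fintype_le _ _).trans ((Finset.sum_le_sum fun p _ => h2 p).trans ?_)
    rw [Finset.sum_const, nsmul_eq_mul, ← ENNReal.ofReal_natCast, ← ENNReal.ofReal_mul (by positivity)]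
    apply ENNReal.ofReal_le_ofReal
    simp only [Finset.card_univ, Fintype.card_prod, Fintype.card_pi, Fintype.card_bool,
      Finset.prod_const, Fintype.card_fin]
    push_cast
    apply le_of_eq
    rw [← mul_pow, ← mul_pow, ← mul_pow]
    congr 1
    ring
  refine (measure_mono ?_).trans ((measure_union_le B1 (⋃ p, B2 p)).trans (add_le_add h1 h3))
  rintro ω ⟨hω, hfar⟩
  by_contra hcon
  simp only [Set.mem_union, Set.mem_iUnion, not_or, not_exists] at hcon
  obtain ⟨hc1, hc2⟩ := hcon
  apply hfar
  intro x y hxy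
  have hc1' : ∀ v : E, ∑ p : Fin k × Bool, (inner ℝ (ω (Sum.inr p)) v)^2 ≤ 64 * (m+k+1:ℝ) * ‖v‖^2 := by
    intro v
    by_contra hv
    exact hc1 ⟨v, not_le.1 hv⟩
  have hc2' : 64 * (m+k+1) * t^2 < ∑ i : {i // x i ≠ y i}, (inner ℝ (ω (Sum.inr (i.1, y i.1)))
        (u (fun j => ω (auxTau m k x j))))^2 := by
    by_contra hv
    exact hc2 (x, y) ⟨hxy, not_lt.1 hv⟩
  have key : ∀ w : E, (∀ i, inner ℝ (ω (Sum.inr (i, y i))) w = 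
      inner ℝ (ω (Sum.inr (i, y i))) (u (fun j => ω (auxTau m k x j)))) → t ≤ ‖w‖ := by
    intro w hw
    have a1 : ∑ i : {i // x i ≠ y i}, (inner ℝ (ω (Sum.inr (i.1, y i.1)))
        (u (fun j => ω (auxTau m k x j))))^2 ≤ 
        ∑ p : Fin k × Bool, (inner ℝ (ω (Sum.inr p)) w)^2 := by
      simp_rw [← hw]
      let em : {i // x i ≠ y i} ↪ Fin k × Bool := ⟨fun i => (i.1, y i.1), fun i j h => by
        simp only [Prod.mk.injEq] at h; exact Subtype.ext h.1⟩
      have : ∑ i : {i // x i ≠ y i}, (inner ℝ (ω (Sum.inr (i.1, y i.1))) w)^2 = 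
        ∑ p ∈ Finset.univ.map em, (inner ℝ (ω (Sum.inr p)) w)^2 := by
        rw [Finset.sum_map]; rfl
      rw [this]
      exact Finset.sum_le_sum_of_subset_of_nonneg (Finset.subset_univ _) (fun _ _ _ => sq_nonneg _)
    have a2 := hc1' w
    have a3 : 64 * (m+k+1:ℝ) * t^2 < 64 * (m+k+1:ℝ) * ‖w‖^2 := by linarith
    have a4 : t^2 < ‖w‖^2 := lt_of_mul_lt_mul_left a3 (by positivity)
    exact (lt_of_pow_lt_pow_left₀ 2 (norm_nonneg _) a4).le
  have hy0 : ∀ i, inner ℝ (ω (Sum.inr (i, y i))) (u (fun j => ω (auxTau m k y j))) = 0 := by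
    intro i
    have := hω y (Fin.natAdd m i)
    rwa [auxTau_natAdd] at this
  constructor
  · apply key; intro i; rw [inner_sub_right, hy0, sub_zero]
  · apply key; intro i; rw [inner_add_right, hy0, add_zero]
end phase

def auxWin {E J : Type*} [NormedAddCommGroup E] [InnerProductSpace ℝ E] (d : ℕ) (η : ℝ)
    (ω : J → E) : Prop :=
  ∃ s : Fin d → J, Function.Injective s ∧ ∃ v : E, ‖v‖ = 1 ∧ ∑ i, (inner ℝ (ω (s i)) v)^2 ≤ η^2

lemma aux_main (m k : ℕ) (hk : 12 ≤ k) (K : ℝ) (hK : (m + k + 1 : ℝ) ≤ K * k)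
    (t : ℝ) (ht : 0 < t) (ht1 : t ≤ 1) (htK : 32 * ((4:ℝ)^64 - 1) * t^2 * K ≤ 1) :
    (Measure.pi fun _ : (Fin m ⊕ Fin k × Bool) ⊕ Fin k =>
      stdGaussian (EuclideanSpace ℝ (Fin (m+k+1)))) {ω | ¬ auxWin (m+k+1) ((3/4:ℝ)^k) ω} ≤
      ENNReal.ofReal ((1/5:ℝ)^(m+k+1)) + ENNReal.ofReal ((Real.exp 1 / 4)^k) +
      ENNReal.ofReal ((1 - 1/(1+16/t))^k) := by
  set E := EuclideanSpace ℝ (Fin (m+k+1)) with hE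
  obtain ⟨u, hu, hu1, hun⟩ := aux_normal (m+k)
  set η : ℝ := (3/4:ℝ)^k with hη
  set ν1 := (Measure.pi fun _ : Fin m ⊕ Fin k × Bool => stdGaussian E) with hν1
  have hp1 := aux_phase1 (E := E) m k (finrank_euclideanSpace_fin) K hK u hu hu1 t ht htK
  set Bad : Set ((Fin m ⊕ Fin k × Bool) → E) :=
    {ω | (∀ x j, inner ℝ (ω (auxTau m k x j)) (u (fun j => ω (auxTau m k x j))) = 0) ∧
        ¬ ∀ x y, k ≤ 16 * hammingDist x y →
          t ≤ ‖u (fun j => ω (auxTau m k x j)) - u (fun j => ω (auxTau m k y j))‖ ∧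
          t ≤ ‖u (fun j => ω (auxTau m k x j)) + u (fun j => ω (auxTau m k y j))‖} with hBad
  have hU : ∀ x, Measurable fun ω : (Fin m ⊕ Fin k × Bool) → E => u (fun j => ω (auxTau m k x j)) :=
    fun x => hu.comp (measurable_pi_lambda _ fun i => measurable_pi_apply _)
  set Nd : Set ((Fin m ⊕ Fin k × Bool) → E) :=
    {ω | ∀ x j, inner ℝ (ω (auxTau m k x j)) (u (fun j => ω (auxTau m k x j))) = 0} with hNd
  have hNdm : MeasurableSet Nd := by
    have : Nd = ⋂ x, ⋂ j, {ω | inner ℝ (ω (auxTau m k x j)) (u (fun j => ω (auxTau m k x j))) = 0} := by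
      ext ω; simp [hNd]
    rw [this]
    refine MeasurableSet.iInter fun x => MeasurableSet.iInter fun j => ?_
    exact measurableSet_eq_fun ((measurable_pi_apply _).inner (hU x)) measurable_const
  set M := toMeasurable ν1 Bad with hM
  have hMm : MeasurableSet M := measurableSet_toMeasurable _ _
  set S : Set (((Fin m ⊕ Fin k × Bool) → E) × (Fin k → E)) :=
    {q | ∀ j x, η < |inner ℝ (q.2 j) (u (fun i => q.1 (auxTau m k x i)))|} with hS
  have hSm : MeasurableSet S := by
    have : S = ⋂ j, ⋂ x, {q | η < |inner ℝ (q.2 j) (u (fun i => q.1 (auxTau m k x i)))|} := by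
      ext ω; simp [hS]
    rw [this]
    refine MeasurableSet.iInter fun j => MeasurableSet.iInter fun x => ?_
    have h1 : Measurable fun q : ((Fin m ⊕ Fin k × Bool) → E) × (Fin k → E) => q.2 j := by fun_prop
    have h2 : Measurable fun q : ((Fin m ⊕ Fin k × Bool) → E) × (Fin k → E) =>
      u (fun i => q.1 (auxTau m k x i)) := (hU x).comp measurable_fst
    exact measurableSet_lt measurable_const (continuous_abs.measurable.comp (h1.inner (𝕜 := ℝ) h2))
  have hfub := aux_fubini (stdGaussian E) (J := (Fin m ⊕ Fin k × Bool) ⊕ Fin k)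
    (Sum.inl : (Fin m ⊕ Fin k × Bool) → _) (Sum.inr : Fin k → _)
    (by rw [Sum.elim_inl_inr]; exact Function.injective_id) (Nd ∩ Mᶜ) (hNdm.inter hMm.compl)
    S hSm (ENNReal.ofReal ((1 - 1/(1+16/t))^k)) (by
      intro a ha
      have hfar : ∀ x y, k ≤ 16 * hammingDist x y →
          t ≤ ‖u (fun j => a (auxTau m k x j)) - u (fun j => a (auxTau m k y j))‖ ∧
          t ≤ ‖u (fun j => a (auxTau m k x j)) + u (fun j => a (auxTau m k y j))‖ := by
        by_contra hc
        exact ha.2 (subset_toMeasurable _ _ ⟨ha.1, hc⟩)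
      have hhit := aux_hit k hk (fun x => u (fun j => a (auxTau m k x j))) (fun x => hu1 _) t ht ht1 hfar
      set H := {b : E | ∃ x, |inner ℝ b (u (fun j => a (auxTau m k x j)))| ≤ (3/4:ℝ)^k} with hH
      have hHm : MeasurableSet H := by
        have : H = ⋃ x, {b : E | |inner ℝ b (u (fun j => a (auxTau m k x j)))| ≤ (3/4:ℝ)^k} := by
          ext ω; simp [hH]
        rw [this]
        refine MeasurableSet.iUnion fun x => ?_
        exact measurableSet_le (continuous_abs.measurable.comp (measurable_id.inner (𝕜 := ℝ) measurable_const))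
          measurable_const
      have hset : {z : Fin k → E | (a, z) ∈ S} = Set.pi Set.univ (fun _ : Fin k => Hᶜ) := by
        ext z
        constructor
        · intro h j _ ⟨x, hx⟩
          exact absurd hx (not_le.2 (h j x))
        · intro h j x
          by_contra hc
          exact h j (Set.mem_univ _) ⟨x, not_lt.1 hc⟩
      rw [hset, Measure.pi_pi, Finset.prod_const, Finset.card_univ, Fintype.card_fin]
      have hc : (stdGaussian E).real Hᶜ = 1 - (stdGaussian E).real H := probReal_compl_eq_one_sub hHm
      have hle : (stdGaussian E) Hᶜ ≤ ENNReal.ofReal (1 - 1/(1+16/t)) := by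
        rw [← ofReal_measureReal, hc]
        apply ENNReal.ofReal_le_ofReal
        exact sub_le_sub_left hhit 1
      rw [ENNReal.ofReal_pow]
      · gcongr
      · rw [sub_nonneg, div_le_one (by positivity)]
        have : 0 < 16 / t := by positivity
        linarith)
  have hMle : (Measure.pi fun _ : (Fin m ⊕ Fin k × Bool) ⊕ Fin k => stdGaussian E)
      ((fun ω i => ω (Sum.inl i)) ⁻¹' M) ≤
      ENNReal.ofReal ((1/5:ℝ)^(m+k+1)) + ENNReal.ofReal ((Real.exp 1 / 4)^k) := by
    refine (Measure.le_map_apply (measurable_pi_lambda _ fun i => measurable_pi_apply _).aemeasurable _).trans ?_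
    rw [aux_law_inj (stdGaussian E) _ Sum.inl_injective, hM, measure_toMeasurable]
    exact hp1
  refine (measure_mono ?_).trans ((measure_union_le _ _).trans (add_le_add hMle hfub))
  intro ω hω
  have hω' : ¬ auxWin (m+k+1) η ω := hω
  by_contra hcon
  simp only [Set.mem_union, not_or] at hcon
  obtain ⟨hc1, hc2⟩ := hcon
  have hη0 : 0 ≤ η := by positivity
  have hsi : ∀ (j : Fin k) (x : Fin k → Bool), Function.Injective
      (Fin.cons (Sum.inr j) (fun i => Sum.inl (auxTau m k x i)) :
        Fin (m+k+1) → (Fin m ⊕ Fin k × Bool) ⊕ Fin k) := by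
    intro j x
    rw [Fin.cons_injective_iff]
    exact ⟨by simp, Sum.inl_injective.comp (auxTau_inj m k x)⟩
  have hwin : ∀ (j : Fin k) (x : Fin k → Bool) (v : E), ‖v‖ = 1 → |inner ℝ (ω (Sum.inr j)) v| ≤ η →
      (∀ i, inner ℝ (ω (Sum.inl (auxTau m k x i))) v = 0) → False := by
    intro j x v hv hj hi
    apply hω'
    refine ⟨_, hsi j x, v, hv, ?_⟩
    rw [Fin.sum_univ_succ]
    simp only [Fin.cons_zero, Fin.cons_succ, hi]
    simp only [ne_eq, OfNat.ofNat_ne_zero, not_false_eq_true, zero_pow, Finset.sum_const_zero, add_zero]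
    rw [← sq_abs]
    gcongr
  have hnd : (fun i => ω (Sum.inl i)) ∈ Nd := by
    intro x
    rcases hun (fun j => ω (Sum.inl (auxTau m k x j))) with h | h
    · exact h
    · exfalso
      obtain ⟨v, hv, hv0, hvj⟩ := h (ω (Sum.inr ⟨0, by omega⟩))
      exact hwin _ x v hv (by rw [hv0, abs_zero]; exact hη0) hvj
  apply hc2
  refine ⟨⟨hnd, hc1⟩, ?_⟩
  intro j x
  by_contra hc
  exact hwin j x _ (hu1 _) (not_lt.1 hc) (hnd x)

lemma aux_embed (d n : ℕ) (J : Type*) [Fintype J] (e : J ↪ Fin n) (η : ℝ) (hη : 0 ≤ η) (B : ENNReal)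
    (hB : (Measure.pi fun _ : J => stdGaussian (EuclideanSpace ℝ (Fin d))) 
      {ω | ¬ auxWin d η ω} ≤ B) :
    (Measure.pi fun _ : Fin d => Measure.pi fun _ : Fin n => gaussianReal 0 1)
      {A : Fin d → Fin n → ℝ | ¬ ∃ S : Finset (Fin n), ∃ hS : S.card = d,
              sigmaMin (Matrix.of fun i j => A i (S.orderEmbOfFin hS j)) ≤ η} ≤ B := by
  have hm : Measurable (fun (A : Fin d → Fin n → ℝ) j =>
      (WithLp.toLp 2 (fun i => A i j) : EuclideanSpace ℝ (Fin d))) := by fun_prop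
  have hm2 : Measurable (fun (ω : Fin n → EuclideanSpace ℝ (Fin d)) (p : J) => ω (e p)) :=
    measurable_pi_lambda _ fun i => measurable_pi_apply _
  rw [← aux_law_inj _ e e.injective, ← aux_transpose, Measure.map_map hm2 hm] at hB
  refine le_trans ?_ ((Measure.le_map_apply (hm2.comp hm).aemeasurable _).trans hB)
  apply measure_mono
  intro A hA hwin
  obtain ⟨s, hs, v, hv, hsum⟩ := hwin
  apply hA
  let f : Fin d ↪ Fin n := ⟨fun i => e (s i), e.injective.comp hs⟩
  refine ⟨Finset.univ.map f, by simp, ?_⟩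
  apply aux_sigma _ v hv η hη
  simp only [Matrix.of_apply]
  refine le_trans (le_of_eq ?_) hsum
  set S := Finset.univ.map f with hS
  have hc : S.card = d := by simp [hS]
  have h1 : ∑ j, (∑ i, A i (S.orderEmbOfFin hc j) * v i)^2 = 
      ∑ a ∈ Finset.univ.map (S.orderEmbOfFin hc).toEmbedding, (∑ i, A i a * v i)^2 := by
    rw [Finset.sum_map]; rfl
  rw [h1, Finset.map_orderEmbOfFin_univ, hS, Finset.sum_map]
  refine Finset.sum_congr rfl fun j _ => ?_
  congr 1
  simp only [PiLp.inner_apply, RCLike.inner_apply, conj_trivial]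
  refine Finset.sum_congr rfl fun i _ => ?_
  rw [mul_comm]
  rfl

lemma aux_fail (K : ℝ) (hK0 : 0 < K) : ∃ c : ℝ, 0 < c ∧ c < 1 ∧ ∀ d n k : ℕ, 12 ≤ k → k + 1 ≤ d →
    (d : ℝ) ≤ K * k → d + 2 * k ≤ n + 1 →
    (Measure.pi fun _ : Fin d => Measure.pi fun _ : Fin n => gaussianReal 0 1)
      {A : Fin d → Fin n → ℝ | ¬ ∃ S : Finset (Fin n), ∃ hS : S.card = d,
              sigmaMin (Matrix.of fun i j => A i (S.orderEmbOfFin hS j)) ≤ (3/4:ℝ)^k} ≤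
      ENNReal.ofReal (3 * c^k) := by
  set W : ℝ := 32 * ((4:ℝ)^64 - 1) * K with hW
  have hW0 : 0 < W := by
    have : (0:ℝ) < 4^64 - 1 := by norm_num
    positivity
  set t : ℝ := 1 / (W + 1) with htdef
  have ht : 0 < t := by positivity
  have ht1 : t ≤ 1 := by rw [htdef, div_le_one (by positivity)]; linarith
  have htK : 32 * ((4:ℝ)^64 - 1) * t^2 * K ≤ 1 := by
    calc 32 * ((4:ℝ)^64 - 1) * t^2 * K = W * t * t := by rw [hW]; ring
      _ ≤ W * t * 1 := by gcongr
      _ ≤ 1 := by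
        rw [htdef, mul_one, mul_one_div, div_le_one (by positivity)]; linarith
  have hp : 0 < 1/(1+16/t) := by positivity
  have hp1 : 1/(1+16/t) ≤ 1 := by
    rw [div_le_one (by positivity)]
    have : 0 < 16 / t := by positivity
    linarith
  refine ⟨max (1/5) (max (Real.exp 1 / 4) (1 - 1/(1+16/t))), ?_, ?_, ?_⟩
  · exact lt_max_of_lt_left (by norm_num)
  · have := Real.exp_one_lt_d9
    refine max_lt (by norm_num) (max_lt (by linarith) (by linarith))
  intro d n k hk hkd hdK hn
  set c := max (1/5) (max (Real.exp 1 / 4) (1 - 1/(1+16/t))) with hc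
  have hc0 : 0 < c := lt_max_of_lt_left (by norm_num)
  have hc1 : c ≤ 1 := by 
    have := Real.exp_one_lt_d9
    refine max_le (by norm_num) (max_le (by linarith) (by linarith))
  obtain ⟨m, rfl⟩ : ∃ m, d = m + k + 1 := ⟨d - (k+1), by omega⟩
  have hcard : Fintype.card ((Fin m ⊕ Fin k × Bool) ⊕ Fin k) ≤ Fintype.card (Fin n) := by
    simp; omega
  obtain ⟨e⟩ := Function.Embedding.nonempty_of_card_le hcard
  refine (aux_embed (m+k+1) n _ e ((3/4)^k) (by positivity) _ (aux_main m k hk K 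
    (by push_cast at hdK; exact hdK) t ht ht1 htK)).trans ?_
  rw [← ENNReal.ofReal_add (by positivity) (by positivity), ← ENNReal.ofReal_add (by positivity)
    (pow_nonneg (by linarith) _)]
  apply ENNReal.ofReal_le_ofReal
  have a1 : (1/5:ℝ)^(m+k+1) ≤ c^k := by
    calc (1/5:ℝ)^(m+k+1) ≤ c^(m+k+1) := by gcongr; exact le_max_left _ _
      _ ≤ c^k := pow_le_pow_of_le_one hc0.le hc1 (by omega)
  have a2 : (Real.exp 1 / 4)^k ≤ c^k := by
    gcongr; exact (le_max_left _ _).trans (le_max_right _ _)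
  have a3 : (1 - 1/(1+16/t))^k ≤ c^k := by
    apply pow_le_pow_left₀ (by linarith)
    exact (le_max_right _ _).trans (le_max_right _ _)
  linarith

/-- Theorem (smoothed analysis of matrix conditioning): for a `d`-by-`n` matrix with iid
standard Gaussian entries, `d ≥ 2` and `n/d ≥ c₀ > 1`, there are constants `c₂, c₄ > 1`,
`0 < c₆ < 1` (depending only on `c₀`) such that with probability at least `1 - 2 c₄ c₆ ^ d`,
some `d`-by-`d` column submatrix has smallest singular value at most `1/(c₄ c₂ ^ (d-1))`. -/
theorem stmt0 (c₀ : ℝ) (hc₀ : 1 < c₀) :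
    ∃ c₂ c₄ c₆ : ℝ, 1 < c₂ ∧ 1 < c₄ ∧ 0 < c₆ ∧ c₆ < 1 ∧
      ∀ d n : ℕ, 2 ≤ d → c₀ ≤ (n : ℝ) / (d : ℝ) →
        ENNReal.ofReal (1 - 2 * c₄ * c₆ ^ d) ≤
          (Measure.pi fun _ : Fin d => Measure.pi fun _ : Fin n => gaussianReal 0 1)
            {A : Fin d → Fin n → ℝ | ∃ S : Finset (Fin n), ∃ hS : S.card = d,
              sigmaMin (Matrix.of fun i j => A i (S.orderEmbOfFin hS j)) ≤
                1 / (c₄ * c₂ ^ (d - 1))} := by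
  obtain ⟨δ, hδ0, hδ1, hδ2⟩ : ∃ δ : ℝ, 0 < δ ∧ 2 * δ ≤ c₀ - 1 ∧ δ ≤ 1/2 := by
    refine ⟨min ((c₀ - 1)/2) (1/2), lt_min (by linarith) (by norm_num), ?_, min_le_right _ _⟩
    have := min_le_left ((c₀ - 1)/2) (1/2)
    linarith
  obtain ⟨c, hc0, hc1, hfail⟩ := aux_fail (2/δ) (by positivity)
  set q : ℝ := (4/3:ℝ)^(δ/4) with hq
  have hq1 : 1 < q := Real.one_lt_rpow (by norm_num) (by positivity)
  set b : ℝ := c^(δ/2) with hb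
  have hb0 : 0 < b := Real.rpow_pos_of_pos hc0 _
  have hb1 : b < 1 := Real.rpow_lt_one hc0.le hc1 (by positivity)
  obtain ⟨D1, hD1⟩ := pow_unbounded_of_one_lt 2 hq1
  obtain ⟨D2, hD2⟩ := exists_nat_ge (24/δ)
  set D := D1 + D2 + 1 with hD
  set g : ℝ := (1/4:ℝ)^(1/(D:ℝ)) with hg
  have hD0 : (0:ℝ) < D := by positivity
  have hg0 : 0 < g := Real.rpow_pos_of_pos (by norm_num) _
  have hg1 : g < 1 := Real.rpow_lt_one (by norm_num) (by norm_num) (by positivity)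
  have hgD : g ^ D = 1/4 := by
    rw [hg, ← Real.rpow_natCast, ← Real.rpow_mul (by norm_num), one_div_mul_cancel hD0.ne', Real.rpow_one]
  refine ⟨q, 2, max b g, hq1, by norm_num, lt_max_of_lt_left hb0, max_lt hb1 hg1, ?_⟩
  intro d n hd hn
  have hd0 : (0:ℝ) < d := by positivity
  have hmx : 0 < max b g := lt_max_of_lt_left hb0
  by_cases hdD : d < D
  · have : 1/4 ≤ (max b g)^d := by
      calc (1/4:ℝ) = g^D := hgD.symm
        _ ≤ g^d := pow_le_pow_of_le_one hg0.le hg1.le hdD.le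
        _ ≤ _ := by gcongr; exact le_max_right _ _
    rw [ENNReal.ofReal_of_nonpos (by linarith)]
    exact zero_le
  push Not at hdD
  rw [le_div_iff₀ hd0] at hn
  set k := ⌊δ * d⌋₊ with hk
  have hkle : (k:ℝ) ≤ δ * d := Nat.floor_le (by positivity)
  have hkge : δ * d < k + 1 := Nat.lt_floor_add_one _
  have hδd : 24 ≤ δ * d := by
    rw [div_le_iff₀ hδ0] at hD2
    have : (D2:ℝ) ≤ d := by exact_mod_cast (by omega : D2 ≤ d)
    nlinarith
  have hk2 : δ/2 * d ≤ k := by nlinarith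
  have hk12 : 12 ≤ k := by
    have : (12:ℝ) ≤ k := by nlinarith
    exact_mod_cast this
  have hF := hfail d n k hk12 (by
    have : (k:ℝ) + 1 ≤ d := by
      have : (2:ℝ) ≤ d := by exact_mod_cast hd
      nlinarith
    exact_mod_cast this) (by
    rw [div_mul_eq_mul_div, le_div_iff₀ hδ0]; nlinarith) (by
    have : (d:ℝ) + 2 * k ≤ n + 1 := by nlinarith
    exact_mod_cast this)
  have hη : (3/4:ℝ)^k ≤ 1 / (2 * q^(d-1)) := by
    have h1 : q^d * q^d ≤ (4/3:ℝ)^k := by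
      rw [← pow_add, hq, ← Real.rpow_natCast, ← Real.rpow_mul (by norm_num), ← Real.rpow_natCast]
      apply Real.rpow_le_rpow_of_exponent_le (by norm_num)
      push_cast
      linarith
    have h2 : 2 ≤ q^d := hD1.le.trans (pow_le_pow_right₀ hq1.le (by omega))
    have h3 : q^(d-1) ≤ q^d := pow_le_pow_right₀ hq1.le (by omega)
    have h4 : 2 * q^(d-1) ≤ (4/3:ℝ)^k := (mul_le_mul h2 h3 (by positivity) (by positivity)).trans h1
    have h5 : (3/4:ℝ)^k = 1 / (4/3)^k := by rw [← one_div_pow]; norm_num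
    rw [h5]
    exact one_div_le_one_div_of_le (by positivity) h4
  have hck : 3 * c^k ≤ 2 * 2 * (max b g)^d := by
    have h1 : c^k ≤ b^d := by
      rw [hb, ← Real.rpow_natCast, ← Real.rpow_natCast, ← Real.rpow_mul hc0.le]
      exact Real.rpow_le_rpow_of_exponent_ge hc0 hc1.le hk2
    have h2 : b^d ≤ (max b g)^d := by gcongr; exact le_max_left _ _
    have h3 : 0 < (max b g)^d := by positivity
    linarith
  rw [ENNReal.ofReal_sub _ (by positivity), ENNReal.ofReal_one, tsub_le_iff_right]
  set μ := (Measure.pi fun _ : Fin d => Measure.pi fun _ : Fin n => gaussianReal 0 1) with hμ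
  calc 1 = μ Set.univ := by rw [measure_univ]
    _ ≤ μ ({A : Fin d → Fin n → ℝ | ∃ S : Finset (Fin n), ∃ hS : S.card = d,
              sigmaMin (Matrix.of fun i j => A i (S.orderEmbOfFin hS j)) ≤ 1 / (2 * q ^ (d - 1))} ∪
          {A : Fin d → Fin n → ℝ | ¬ ∃ S : Finset (Fin n), ∃ hS : S.card = d,
              sigmaMin (Matrix.of fun i j => A i (S.orderEmbOfFin hS j)) ≤ (3/4:ℝ)^k}) := by
      apply measure_mono
      intro A _
      by_cases hA : ∃ S : Finset (Fin n), ∃ hS : S.card = d,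
              sigmaMin (Matrix.of fun i j => A i (S.orderEmbOfFin hS j)) ≤ (3/4:ℝ)^k
      · left
        obtain ⟨S, hS, h⟩ := hA
        exact ⟨S, hS, h.trans hη⟩
      · right; exact hA
    _ ≤ _ := (measure_union_le _ _).trans (by
      gcongr
      exact hF.trans (ENNReal.ofReal_le_ofReal hck))
end

section
/- Let d ≥ 2 and let A be a d-by-n random matrix whose entries are independent standard Gaussian random variables, with 1 < n/(d−1) ≤ C₀ for some constant C₀. Then there exist constants C₁ > 1 and 0 < C₂ < 1, depending only on C₀, such that with probability at least 1 − n·C₂^{d−1} one has min over subsets S ⊆ [n] with |S| = d of σ_d(A_S) ≥ 1/C₁^{d−1}. -/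
open MeasureTheory ProbabilityTheory

theorem pi_le_of_slice {ι : Type*} [Fintype ι] [DecidableEq ι] {X : ι → Type*}
    [∀ i, MeasurableSpace (X i)] (μ : ∀ i, Measure (X i)) [∀ i, IsProbabilityMeasure (μ i)]
    (i : ι) (E : Set (∀ i, X i)) (hE : MeasurableSet E) (c : ENNReal)
    (h : ∀ A, μ i {v | Function.update A i v ∈ E} ≤ c) : Measure.pi μ E ≤ c := by
  classical
  have hne : Nonempty (∀ i, X i) := ⟨fun i => (nonempty_of_isProbabilityMeasure (μ i)).some⟩
  obtain ⟨x0⟩ := hne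
  have hf : Measurable (E.indicator (fun _ => (1 : ENNReal))) := measurable_const.indicator hE
  rw [← lintegral_indicator_one hE]
  change ∫⁻ a, E.indicator (fun _ => (1 : ENNReal)) a ∂_ ≤ c
  rw [lintegral_eq_lmarginal_univ x0, lmarginal_erase' _ hf (Finset.mem_univ i)]
  calc _ ≤ lmarginal μ (Finset.univ.erase i) (fun _ => c) x0 := by
        apply lmarginal_mono
        intro A
        have : (fun v => E.indicator (fun _ => (1 : ENNReal)) (Function.update A i v))
          = ({v | Function.update A i v ∈ E}).indicator 1 := by
          ext v; simp [Set.indicator]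
        simp only [this]
        have hm : MeasurableSet {v | Function.update A i v ∈ E} := hE.preimage (measurable_update A)
        exact (lintegral_indicator_one hm).trans_le (h A)
    _ = c := by simp [lmarginal]

theorem gauss_interval (a δ : ℝ) (hδ : 0 ≤ δ) :
    gaussianReal 0 1 {t | |t - a| < δ} ≤ ENNReal.ofReal (2 * δ) := by
  have hs : {t | |t - a| < δ} = Set.Ioo (a - δ) (a + δ) := by
    ext t; simp only [Set.mem_ofPred_eq, Set.mem_Ioo, abs_lt]; constructor <;> rintro ⟨h1, h2⟩ <;> constructor <;> linarith
  rw [gaussianReal_apply _ (by norm_num), hs]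
  calc _ ≤ ∫⁻ x in Set.Ioo (a - δ) (a + δ), 1 := by
        apply lintegral_mono
        intro x
        simp only [gaussianPDF, gaussianPDFReal]
        rw [← ENNReal.ofReal_one]
        apply ENNReal.ofReal_le_ofReal
        have h1 : (√(2 * Real.pi * (1 : NNReal)))⁻¹ ≤ 1 := by
          apply inv_le_one_of_one_le₀
          rw [Real.one_le_sqrt]
          have := Real.pi_gt_three
          push_cast; linarith
        have h2 : Real.exp (-(x - 0) ^ 2 / (2 * (1 : NNReal))) ≤ 1 := by
          apply Real.exp_le_one_iff.2
          have := sq_nonneg (x - 0)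
          apply div_nonpos_of_nonpos_of_nonneg <;> simp; positivity
        calc _ ≤ (1:ℝ) * 1 := by gcongr
          _ = 1 := by norm_num
    _ = _ := by
        rw [setLIntegral_one, Real.volume_Ioo]; congr 1; ring

theorem linAlg {d : ℕ} (hd : 0 < d) (M : Matrix (Fin d) (Fin d) ℝ) (ε : ℝ) (hε : 0 < ε)
    (h : sigmaMin M < ε) : ∃ i, ∃ y : Fin d → ℝ, y i = 1 ∧
      ∀ k, |∑ l, y l * M l k| < (d : ℝ) ^ 2 * ε := by
  have hd' : (1 : ℝ) ≤ d := by exact_mod_cast hd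
  by_cases hdet : M.det = 0
  · obtain ⟨y, hy, hyM⟩ := Matrix.exists_vecMul_eq_zero_iff.2 hdet
    obtain ⟨i, hi⟩ := Function.ne_iff.1 hy
    refine ⟨i, fun l => y l / y i, div_self hi, fun k => ?_⟩
    have := congrFun hyM k
    simp only [Matrix.vecMul, dotProduct, Pi.zero_apply] at this
    have h2 : ∑ l, y l / y i * M l k = (∑ l, y l * M l k) / y i := by
      rw [Finset.sum_div]; apply Finset.sum_congr rfl; intros; ring
    rw [h2, this]; simp; positivity
  · have hu : IsUnit M.det := isUnit_iff_ne_zero.2 hdet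
    have hN : M⁻¹ * M = 1 := Matrix.nonsing_inv_mul _ hu
    unfold sigmaMin at h
    obtain ⟨r, ⟨x, hx, rfl⟩, hr⟩ := exists_lt_of_csInf_lt (by
      have hx0 : ‖EuclideanSpace.single (⟨0, hd⟩ : Fin d) (1 : ℝ)‖ = 1 := by simp
      exact ⟨‖(EuclideanSpace.equiv (Fin d) ℝ).symm (M.mulVec ((EuclideanSpace.equiv (Fin d) ℝ)
        (EuclideanSpace.single (⟨0, hd⟩ : Fin d) (1 : ℝ))))‖, _, hx0, rfl⟩) h
    set z : Fin d → ℝ := M.mulVec (fun j => x j) with hz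
    have hzi : ∀ i, |z i| < ε := fun i => lt_of_le_of_lt (PiLp.norm_apply_le ((EuclideanSpace.equiv (Fin d) ℝ).symm z) i) hr
    have hxz : ∀ j, x j = ∑ i, M⁻¹ j i * z i := by
      intro j
      have : M⁻¹.mulVec z = fun j => x j := by rw [hz, Matrix.mulVec_mulVec, hN, Matrix.one_mulVec]
      exact (congrFun this j).symm
    have key : ∃ j i, 1 / ((d:ℝ)^2 * ε) < |M⁻¹ j i| := by
      by_contra! hc
      have hxj : ∀ j, |x j| < 1 / d := by
        intro j
        rw [hxz]
        calc _ ≤ ∑ i, |M⁻¹ j i * z i| := Finset.abs_sum_le_sum_abs _ _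
          _ < ∑ i : Fin d, 1 / ((d:ℝ)^2 * ε) * ε := by
            apply Finset.sum_lt_sum_of_nonempty ⟨⟨0, hd⟩, Finset.mem_univ _⟩
            intro i _
            rw [abs_mul]
            have := hzi i
            have h3 := hc j i
            have h4 : 0 < 1 / ((d:ℝ)^2 * ε) := by positivity
            calc _ ≤ 1 / ((d:ℝ)^2 * ε) * |z i| := by gcongr
              _ < _ := by gcongr
          _ = 1 / d := by simp; field_simp
      have hn : ∑ j, x j ^ 2 = 1 := by
        have := EuclideanSpace.real_norm_sq_eq x
        rw [hx] at this; linarith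
      have : ∑ j, x j ^ 2 < ∑ j : Fin d, (1 / (d:ℝ)) ^ 2 := by
        apply Finset.sum_lt_sum_of_nonempty ⟨⟨0, hd⟩, Finset.mem_univ _⟩
        intro j _
        rw [← sq_abs]
        have := hxj j
        gcongr
      rw [hn] at this
      have h5 : ∑ j : Fin d, (1 / (d:ℝ)) ^ 2 = 1 / (d:ℝ) := by simp; field_simp
      rw [h5] at this
      have : 1 / (d:ℝ) ≤ 1 := by rw [div_le_one (by positivity)]; exact hd'
      linarith
    obtain ⟨j, i, hji⟩ := key
    have hpos : 0 < |M⁻¹ j i| := lt_trans (by positivity) hji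
    refine ⟨i, fun l => M⁻¹ j l / M⁻¹ j i, div_self (abs_pos.1 hpos), fun k => ?_⟩
    have h2 : ∑ l, M⁻¹ j l / M⁻¹ j i * M l k = (1 : Matrix (Fin d) (Fin d) ℝ) j k / M⁻¹ j i := by
      rw [← hN, Matrix.mul_apply, Finset.sum_div]; apply Finset.sum_congr rfl; intros; ring
    rw [h2, abs_div]
    have h6 : |(1 : Matrix (Fin d) (Fin d) ℝ) j k| ≤ 1 := by
      rw [Matrix.one_apply]; split_ifs <;> simp
    calc _ ≤ 1 / |M⁻¹ j i| := by gcongr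
      _ < _ := by
        rw [div_lt_iff₀ hpos]; rw [div_lt_iff₀ (by positivity)] at hji; linarith

/-- normalized normal vector -/
theorem exists_normal {d : ℕ} (B : Matrix (Fin d) (Fin d) ℝ) (i : Fin d) :
    ∃ u : Fin d → ℝ, ∃ k0, u k0 = 1 ∧ (∀ k, |u k| ≤ 1) ∧ ∀ l, l ≠ i → ∑ k, B l k * u k = 0 := by
  have hdet : (B.updateRow i 0).det = 0 := Matrix.det_eq_zero_of_row_eq_zero i (by simp)
  obtain ⟨u, hu, hBu⟩ := Matrix.exists_mulVec_eq_zero_iff.2 hdet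
  have : Nonempty (Fin d) := ⟨i⟩
  obtain ⟨k0, hk0⟩ := Finite.exists_max (fun k => |u k|)
  have hpos : 0 < |u k0| := by
    obtain ⟨k, hk⟩ := Function.ne_iff.1 hu
    exact lt_of_lt_of_le (abs_pos.2 hk) (hk0 k)
  refine ⟨fun k => u k / u k0, k0, div_self (abs_pos.1 hpos), fun k => ?_, fun l hl => ?_⟩
  · rw [abs_div, div_le_one hpos]; exact hk0 k
  · have := congrFun hBu l
    simp only [Matrix.mulVec, dotProduct, Matrix.updateRow_ne hl, Pi.zero_apply] at this
    have h2 : ∑ k, B l k * (u k / u k0) = (∑ k, B l k * u k) / u k0 := by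
      rw [Finset.sum_div]; apply Finset.sum_congr rfl; intros; ring
    rw [h2, this, zero_div]

def badSet {d n : ℕ} (s : Fin d → Fin n) (δ : ℝ) (i : Fin d) : Set (Fin d → Fin n → ℝ) :=
  {A | ∃ y : Fin d → ℝ, y i = 1 ∧ ∀ k, |∑ l, y l * A l (s k)| < δ}

theorem badSet_open {d n : ℕ} (s : Fin d → Fin n) (δ : ℝ) (i : Fin d) : IsOpen (badSet s δ i) := by
  have : badSet s δ i = ⋃ y : Fin d → ℝ, ⋃ _ : y i = 1, ⋂ k, {A | |∑ l, y l * A l (s k)| < δ} := by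
    ext A; simp [badSet]
  rw [this]
  refine isOpen_iUnion fun y => isOpen_iUnion fun _ => isOpen_iInter_of_finite fun k => ?_
  exact isOpen_lt (by fun_prop) continuous_const

theorem slab {d n : ℕ} (s : Fin d → Fin n) (hs : Function.Injective s) (u : Fin d → ℝ) (k0 : Fin d)
    (hu : u k0 = 1) (δ : ℝ) (hδ : 0 ≤ δ) :
    (Measure.pi fun _ : Fin n => gaussianReal 0 1) {v | |∑ k, u k * v (s k)| < δ}
      ≤ ENNReal.ofReal (2 * δ) := by
  apply pi_le_of_slice _ (s k0)
  · exact (isOpen_lt (by fun_prop) continuous_const).measurableSet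
  · intro A
    refine le_trans (measure_mono ?_) (gauss_interval (-∑ k ∈ Finset.univ.erase k0, u k * A (s k)) δ hδ)
    intro t ht
    simp only [Set.mem_ofPred_eq] at ht ⊢
    convert ht using 2
    rw [← Finset.add_sum_erase _ _ (Finset.mem_univ k0)]
    simp only [Function.update_self, hu, one_mul, sub_neg_eq_add]
    congr 1
    apply Finset.sum_congr rfl
    intro k hk
    rw [Function.update_of_ne (fun h => (Finset.ne_of_mem_erase hk) (hs h))]

theorem badSet_le {d n : ℕ} (s : Fin d → Fin n) (hs : Function.Injective s) (δ : ℝ) (hδ : 0 ≤ δ)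
    (i : Fin d) :
    (Measure.pi fun _ : Fin d => Measure.pi fun _ : Fin n => gaussianReal 0 1) (badSet s δ i)
      ≤ ENNReal.ofReal (2 * (d * δ)) := by
  apply pi_le_of_slice _ i _ (badSet_open s δ i).measurableSet
  intro A
  obtain ⟨u, k0, hu, hu1, hort⟩ := exists_normal (Matrix.of fun l k => A l (s k)) i
  refine le_trans (measure_mono ?_) (slab s hs u k0 hu (d * δ) (by positivity))
  rintro v ⟨y, hy, hk⟩
  simp only [Set.mem_ofPred_eq]
  have e : ∑ k, u k * v (s k) = ∑ k, u k * ∑ l, y l * Function.update A i v l (s k) := by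
    simp_rw [Finset.mul_sum]
    symm
    rw [Finset.sum_comm, ← Finset.add_sum_erase _ _ (Finset.mem_univ i)]
    rw [Finset.sum_eq_zero (s := Finset.univ.erase i)]
    · simp [hy]
    · intro l hl
      have hl := Finset.ne_of_mem_erase hl
      have := hort l hl
      simp only [Matrix.of_apply] at this
      calc _ = y l * ∑ k, A l (s k) * u k := by
            rw [Finset.mul_sum]; apply Finset.sum_congr rfl; intro k _
            rw [Function.update_of_ne hl]; ring
        _ = 0 := by rw [this, mul_zero]
  rw [e]
  calc _ ≤ ∑ k, |u k * ∑ l, y l * Function.update A i v l (s k)| := Finset.abs_sum_le_sum_abs _ _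
    _ < ∑ k : Fin d, δ := by
      apply Finset.sum_lt_sum_of_nonempty ⟨i, Finset.mem_univ _⟩
      intro k _
      rw [abs_mul]
      calc _ ≤ 1 * |∑ l, y l * Function.update A i v l (s k)| := by gcongr; exact hu1 k
        _ < δ := by rw [one_mul]; exact hk k
    _ = d * δ := by simp

/-- Theorem: for a `d`-by-`n` matrix with iid standard Gaussian entries, `d ≥ 2` and
`1 < n/(d-1) ≤ C₀`, there are constants `C₁ > 1` and `0 < C₂ < 1` (depending only on `C₀`)
such that with probability at least `1 - n C₂ ^ (d-1)`, every `d`-by-`d` column submatrix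
has smallest singular value at least `1/C₁ ^ (d-1)`. -/
theorem stmt1 (C₀ : ℝ) :
    ∃ C₁ C₂ : ℝ, 1 < C₁ ∧ 0 < C₂ ∧ C₂ < 1 ∧
      ∀ d n : ℕ, 2 ≤ d → 1 < (n : ℝ) / ((d : ℝ) - 1) → (n : ℝ) / ((d : ℝ) - 1) ≤ C₀ →
        ENNReal.ofReal (1 - (n : ℝ) * C₂ ^ (d - 1)) ≤
          (Measure.pi fun _ : Fin d => Measure.pi fun _ : Fin n => gaussianReal 0 1)
            {A : Fin d → Fin n → ℝ | ∀ S : Finset (Fin n), ∀ hS : S.card = d,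
              1 / C₁ ^ (d - 1) ≤
                sigmaMin (Matrix.of fun i j => A i (S.orderEmbOfFin hS j))} := by
  obtain ⟨K, hK⟩ := exists_nat_ge C₀
  have hC1 : (1 : ℝ) < 32 * 2 ^ K := by
    have : (1:ℝ) ≤ 2 ^ K := one_le_pow₀ (by norm_num)
    linarith
  refine ⟨32 * 2 ^ K, 1 / 2, hC1, by norm_num, by norm_num, ?_⟩
  intro d n hd h1 h2
  obtain ⟨m, rfl⟩ : ∃ m, d = m + 1 := ⟨d - 1, by omega⟩
  have hm : 0 < m := by omega
  have hm' : (0 : ℝ) < m := by exact_mod_cast hm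
  simp only [Nat.cast_add, Nat.cast_one, add_sub_cancel_right, Nat.add_sub_cancel] at h1 h2 ⊢
  have hn1 : m + 1 ≤ n := by
    rw [lt_div_iff₀ hm', one_mul] at h1
    exact_mod_cast h1
  have hn2 : n ≤ K * m := by
    have := h2.trans hK
    rw [div_le_iff₀ hm'] at this
    exact_mod_cast this
  set ε : ℝ := 1 / (32 * 2 ^ K) ^ m with hε
  have hεpos : 0 < ε := by positivity
  set μ := (Measure.pi fun _ : Fin (m+1) => Measure.pi fun _ : Fin n => gaussianReal 0 1) with hμ
  set δ : ℝ := ((m + 1 : ℕ) : ℝ) ^ 2 * ε with hδ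
  have hδpos : 0 ≤ δ := by positivity
  let U : Set (Fin (m+1) → Fin n → ℝ) :=
    ⋃ S : {S : Finset (Fin n) // S.card = m + 1}, ⋃ i, badSet (S.1.orderEmbOfFin S.2) δ i
  have hUo : IsOpen U := isOpen_iUnion fun S => isOpen_iUnion fun i => badSet_open _ _ _
  have hUm : μ U ≤ ENNReal.ofReal (n * (1 / 2) ^ m) := by
    have hb : ∀ S : {S : Finset (Fin n) // S.card = m + 1},
        μ (⋃ i, badSet (S.1.orderEmbOfFin S.2) δ i)
          ≤ ((m + 1 : ℕ) : ENNReal) * ENNReal.ofReal (2 * ((m + 1 : ℕ) * δ)) := by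
      intro S
      refine (measure_iUnion_fintype_le _ _).trans ?_
      refine (Finset.sum_le_sum fun i _ =>
        badSet_le _ (S.1.orderEmbOfFin S.2).injective δ hδpos i).trans ?_
      simp
    refine (measure_iUnion_fintype_le _ _).trans ((Finset.sum_le_sum fun S _ => hb S).trans ?_)
    have hcard : Fintype.card {S : Finset (Fin n) // S.card = m + 1} ≤ 2 ^ n := by
      refine (Fintype.card_subtype_le _).trans ?_
      simp
    rw [Finset.sum_const, nsmul_eq_mul, Finset.card_univ]
    calc _ ≤ ((2 ^ n : ℕ) : ENNReal) * (((m + 1 : ℕ) : ENNReal) * ENNReal.ofReal (2 * ((m + 1 : ℕ) * δ))) := by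
          gcongr
      _ = ENNReal.ofReal ((2 ^ n : ℕ) * ((m + 1 : ℕ) * (2 * ((m + 1 : ℕ) * δ)))) := by
          rw [ENNReal.ofReal_mul (p := ((2 ^ n : ℕ) : ℝ)) (by positivity),
            ENNReal.ofReal_mul (p := ((m + 1 : ℕ) : ℝ)) (q := 2 * ((m + 1 : ℕ) * δ)) (by positivity),
            ENNReal.ofReal_natCast, ENNReal.ofReal_natCast]
      _ ≤ _ := by
          apply ENNReal.ofReal_le_ofReal
          have hm2 : ((m + 1 : ℕ) : ℝ) ≤ 2 ^ m := by
            exact_mod_cast Nat.lt_two_pow_self (n := m)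
          have hnm : ((m + 1 : ℕ) : ℝ) ≤ n := by exact_mod_cast hn1
          have h2n : ((2 ^ n : ℕ) : ℝ) ≤ (2 ^ K) ^ m := by
            rw [← pow_mul]; push_cast
            exact pow_le_pow_right₀ (by norm_num) hn2
          have h22 : (2 : ℝ) ≤ 2 ^ m := by
            calc (2:ℝ) = 2 ^ 1 := by norm_num
              _ ≤ _ := pow_le_pow_right₀ (by norm_num) hm
          calc _ = ((2 ^ n : ℕ) : ℝ) * ((m + 1 : ℕ) * (2 * ((m + 1 : ℕ) ^ 3 * ε))) := by
                rw [hδ]; ring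
            _ ≤ (2 ^ K) ^ m * (n * (2 ^ m * ((2 ^ m) ^ 3 * ε))) := by gcongr
            _ = n * (1 / 2) ^ m := by
              rw [hε]
              have : (32 : ℝ) ^ m = (2 ^ m) ^ 5 := by rw [← pow_mul, mul_comm, pow_mul]; norm_num
              rw [mul_pow, this, one_div_pow]
              field_simp
  have hsub : Uᶜ ⊆ {A : Fin (m+1) → Fin n → ℝ | ∀ S : Finset (Fin n), ∀ hS : S.card = m + 1,
      ε ≤ sigmaMin (Matrix.of fun i j => A i (S.orderEmbOfFin hS j))} := by
    intro A hA S hS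
    by_contra! hlt
    apply hA
    obtain ⟨i, y, hy, hk⟩ := linAlg (Nat.succ_pos m) _ ε hεpos hlt
    exact Set.mem_iUnion.2 ⟨⟨S, hS⟩, Set.mem_iUnion.2 ⟨i, y, hy, hk⟩⟩
  refine le_trans ?_ (measure_mono hsub)
  rw [prob_compl_eq_one_sub hUo.measurableSet, ENNReal.ofReal_sub _ (by positivity), ENNReal.ofReal_one]
  exact tsub_le_tsub_left hUm 1
end

section
/- Let A(n,t,w) denote the maximum number of binary vectors of length n with exactly w ones whose pairwise Hamming distance is at least t. Then for every c₀ > 1 there exist constants c₁ > 0 and c₂ > 1, depending only on c₀, such that for all d ≥ 1 and all n with n/d ≥ c₀ one has A(n, c₁·d, d) ≥ c₂^d. -/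
theorem code_aux (k : ℕ) : ∃ C : Finset (Finset (Fin k)),
    (∀ S ∈ C, ∀ T ∈ C, S ≠ T → k ≤ 8 * (symmDiff S T).card) ∧
    ((4 / 3 : ℝ)) ^ k ≤ (C.card : ℝ) := by
  classical
  let G : Finset (Finset (Finset (Fin k))) := Finset.univ.filter
    (fun C => ∀ S ∈ C, ∀ T ∈ C, S ≠ T → k ≤ 8 * (symmDiff S T).card)
  have hG : G.Nonempty := ⟨∅, by simp [G]⟩
  obtain ⟨C, hC, hmax⟩ := G.exists_max_image Finset.card hG
  have hC' : ∀ S ∈ C, ∀ T ∈ C, S ≠ T → k ≤ 8 * (symmDiff S T).card := by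
    simpa [G] using hC
  refine ⟨C, hC', ?_⟩
  rcases Nat.eq_zero_or_pos k with hk | hk
  · subst hk
    have h1 : ({∅} : Finset (Finset (Fin 0))) ∈ G := by simp [G]
    have := hmax _ h1
    simp only [Finset.card_singleton] at this
    simpa using this
  let V : Finset (Finset (Fin k)) := Finset.univ.filter (fun U => 8 * U.card < k)
  have cover : ∀ T : Finset (Fin k), ∃ S ∈ C, 8 * (symmDiff S T).card < k := by
    intro T
    by_contra! h
    have hT : T ∉ C := by
      intro hT
      have := h T hT
      simp at this
      omega
    have h1 : insert T C ∈ G := by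
      simp only [G, Finset.mem_filter, Finset.mem_univ, true_and]
      intro A hA B hB hAB
      rcases Finset.mem_insert.1 hA with rfl | hA2
      · rcases Finset.mem_insert.1 hB with rfl | hB
        · exact absurd rfl hAB
        · rw [symmDiff_comm]; exact h B hB
      · rcases Finset.mem_insert.1 hB with rfl | hB
        · exact h A hA2
        · exact hC' A hA2 B hB hAB
    have := hmax _ h1
    rw [Finset.card_insert_of_notMem hT] at this
    omega
  have h2 : 2 ^ k ≤ C.card * V.card := by
    have : (Finset.univ : Finset (Finset (Fin k))) ⊆
        (C ×ˢ V).image (fun p => symmDiff p.1 p.2) := by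
      intro T _
      obtain ⟨S, hS, hST⟩ := cover T
      refine Finset.mem_image.2 ⟨(S, symmDiff S T), ?_, ?_⟩
      · simp [V, hS, hST]
      · simp
    have h3 := (Finset.card_le_card this).trans Finset.card_image_le
    simpa [Finset.card_product] using h3
  have h3 : (V.card : ℝ) * (3 / 4) ^ k ≤ (1 + (3 / 4) ^ 8) ^ k := by
    calc (V.card : ℝ) * (3 / 4) ^ k = ∑ U ∈ V, (3 / 4 : ℝ) ^ k := by simp
      _ ≤ ∑ U ∈ V, ((3 / 4 : ℝ) ^ 8) ^ U.card := by
        refine Finset.sum_le_sum fun U hU => ?_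
        rw [← pow_mul]
        have : 8 * U.card < k := by simpa [V] using hU
        exact pow_le_pow_of_le_one (by norm_num) (by norm_num) this.le
      _ ≤ ∑ U : Finset (Fin k), ((3 / 4 : ℝ) ^ 8) ^ U.card :=
        Finset.sum_le_sum_of_subset_of_nonneg (Finset.subset_univ _)
          (fun _ _ _ => by positivity)
      _ = (1 + (3 / 4) ^ 8) ^ k := by
        have := Finset.prod_one_add (f := fun _ : Fin k => ((3 / 4 : ℝ) ^ 8)) Finset.univ
        simp only [Finset.prod_const, Finset.powerset_univ] at this
        rw [← this]; simp
  have h4 : (2 : ℝ) ^ k ≤ C.card * V.card := by exact_mod_cast h2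
  have h5 : (2 * (3 / 4) : ℝ) ^ k ≤ C.card * (1 + (3 / 4) ^ 8) ^ k := by
    rw [mul_pow]
    calc (2 : ℝ) ^ k * (3 / 4) ^ k ≤ (C.card * V.card) * (3 / 4) ^ k := by gcongr
      _ = C.card * (V.card * (3 / 4) ^ k) := by ring
      _ ≤ _ := by gcongr
  have h6 : (4 / 3 : ℝ) ^ k * (1 + (3 / 4) ^ 8) ^ k ≤ C.card * (1 + (3 / 4) ^ 8) ^ k := by
    refine le_trans ?_ h5
    rw [← mul_pow]
    exact pow_le_pow_left₀ (by norm_num) (by norm_num) k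
  exact le_of_mul_le_mul_right h6 (by positivity)


/-- Lemma (Gilbert–Varshamov type bound): identifying binary vectors of length `n` with
exactly `w` ones with `w`-element subsets of `Fin n` (Hamming distance = cardinality of the
symmetric difference), for every `c₀ > 1` there exist constants `c₁ > 0` and `c₂ > 1`
(depending only on `c₀`) such that for all `d ≥ 1` and all `n` with `n/d ≥ c₀` there is a
family of `d`-element subsets of `Fin n`, of cardinality at least `c₂^d`, whose members have
pairwise Hamming distance at least `c₁ d`; that is, `A(n, c₁ d, d) ≥ c₂^d`. -/
theorem stmt13 (c₀ : ℝ) (hc₀ : 1 < c₀) :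
    ∃ c₁ c₂ : ℝ, 0 < c₁ ∧ 1 < c₂ ∧
      ∀ d n : ℕ, 1 ≤ d → c₀ ≤ (n : ℝ) / (d : ℝ) →
        ∃ 𝓕 : Finset (Finset (Fin n)),
          (∀ S ∈ 𝓕, S.card = d) ∧
          (∀ S ∈ 𝓕, ∀ T ∈ 𝓕, S ≠ T → c₁ * (d : ℝ) ≤ ((symmDiff S T).card : ℝ)) ∧
          c₂ ^ d ≤ (𝓕.card : ℝ) := by
  classical
  set ε : ℝ := min 1 (c₀ - 1) with hε
  have hε0 : 0 < ε := lt_min one_pos (by linarith)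
  refine ⟨ε / 8, (4 / 3 : ℝ) ^ ε, by positivity, Real.one_lt_rpow (by norm_num) hε0, ?_⟩
  intro d n hd hn
  have hd' : (0 : ℝ) < d := by exact_mod_cast hd
  rw [le_div_iff₀ hd'] at hn
  have hdn : d ≤ n := by
    have : (d : ℝ) ≤ n := by nlinarith
    exact_mod_cast this
  obtain ⟨k, hkd, hkn, hk⟩ : ∃ k : ℕ, k ≤ d ∧ d + k ≤ n ∧ ε * d ≤ (k : ℝ) := by
    refine ⟨min d (n - d), min_le_left _ _, by omega, ?_⟩
    rw [Nat.cast_min, Nat.cast_sub hdn]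
    refine le_min ?_ ?_
    · have := min_le_left 1 (c₀ - 1)
      nlinarith
    · have := min_le_right 1 (c₀ - 1)
      nlinarith
  obtain ⟨C, hC, hCc⟩ := code_aux k
  obtain ⟨e⟩ : Nonempty (Fin k ⊕ (Fin k ⊕ Fin (d - k)) ↪ Fin n) := by
    apply Function.Embedding.nonempty_of_card_le
    simp
    omega
  let φ : Finset (Fin k) → Finset (Fin n) := fun U =>
    (U.disjSum ((Uᶜ).disjSum (Finset.univ : Finset (Fin (d - k))))).map e
  have hφl : ∀ U x, e (Sum.inl x) ∈ φ U ↔ x ∈ U := by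
    intro U x
    simp [φ]
  have hinj : Function.Injective φ := by
    intro A B h
    ext x
    rw [← hφl A, ← hφl B, h]
  refine ⟨C.image φ, ?_, ?_, ?_⟩
  · intro S hS
    obtain ⟨U, _, rfl⟩ := Finset.mem_image.1 hS
    have h1 := U.card_le_univ
    simp only [Fintype.card_fin] at h1
    simp [φ, Finset.card_compl]
    omega
  · intro S hS T hT hST
    obtain ⟨A, hA, rfl⟩ := Finset.mem_image.1 hS
    obtain ⟨B, hB, rfl⟩ := Finset.mem_image.1 hT
    have h1 := hC A hA B hB (fun h => hST (by rw [h]))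
    have h2 : (symmDiff A B).card ≤ (symmDiff (φ A) (φ B)).card := by
      apply Finset.card_le_card_of_injOn (fun x => e (Sum.inl x))
      · intro x hx
        simp only [Finset.mem_coe, Finset.mem_symmDiff, hφl] at hx ⊢
        exact hx
      · intro x _ y _ h
        exact Sum.inl_injective (e.injective h)
    have h3 : (k : ℝ) ≤ 8 * ((symmDiff (φ A) (φ B)).card : ℝ) := by
      exact_mod_cast h1.trans (Nat.mul_le_mul_left 8 h2)
    linarith
  · rw [Finset.card_image_of_injective _ hinj]
    refine le_trans ?_ hCc
    rw [← Real.rpow_natCast, ← Real.rpow_mul (by norm_num), ← Real.rpow_natCast]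
    exact Real.rpow_le_rpow_of_exponent_le (by norm_num) hk
end

section
/- Let μ ∈ ℝ and σ > 0. Let X₁, …, X_k be independent N(0,σ²) random variables and let Y₁, …, Y_k be independent N(μ,σ²) random variables. Then for every t, ℙ( Σ_{i=1}^{k} Xᵢ² ≥ t² ) ≤ ℙ( Σ_{i=1}^{k} Yᵢ² ≥ t² ). -/
open MeasureTheory ProbabilityTheory

lemma aux_one (μ : ℝ) (v : NNReal) (hv : v ≠ 0) (a : ℝ) (ha : 0 ≤ a) :
    gaussianReal μ v (Set.Ioo (-a) a) ≤ gaussianReal 0 v (Set.Ioo (-a) a) := by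
  have hmap : gaussianReal μ v (Set.Ioo (-a) a) = gaussianReal 0 v (Set.Ioo (-a - μ) (a - μ)) := by
    have h := gaussianReal_map_add_const (μ := 0) (v := v) μ
    rw [zero_add] at h
    rw [← h, Measure.map_apply (by fun_prop) measurableSet_Ioo]
    congr 1
    ext x
    simp only [Set.mem_preimage, Set.mem_Ioo]
    constructor <;> rintro ⟨h1, h2⟩ <;> constructor <;> linarith
  rw [hmap]
  set I := Set.Ioo (-a) a with hI
  set J := Set.Ioo (-a - μ) (a - μ) with hJ
  have mI : MeasurableSet I := measurableSet_Ioo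
  have mJ : MeasurableSet J := measurableSet_Ioo
  have hvol : volume (J \ I) = volume (I \ J) := by
    have h1 := measure_inter_add_sdiff (μ := volume) J mI
    have h2 := measure_inter_add_sdiff (μ := volume) I mJ
    have h3 : volume J = volume I := by
      rw [hI, hJ, Real.volume_Ioo, Real.volume_Ioo]
      congr 1; ring
    have h4 : volume (J ∩ I) ≠ ⊤ :=
      ((measure_mono Set.inter_subset_right).trans_lt measure_Ioo_lt_top).ne
    rw [h3, ← h2, Set.inter_comm I J] at h1
    exact (ENNReal.add_right_inj h4).1 h1
  have mono : ∀ x y : ℝ, x ^ 2 ≤ y ^ 2 → gaussianPDF 0 v y ≤ gaussianPDF 0 v x := by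
    intro x y hxy
    simp only [gaussianPDF, gaussianPDFReal, sub_zero]
    gcongr
  have hd : gaussianReal 0 v (J \ I) ≤ gaussianReal 0 v (I \ J) := by
    rw [gaussianReal_apply 0 hv, gaussianReal_apply 0 hv]
    calc ∫⁻ x in J \ I, gaussianPDF 0 v x ≤ ∫⁻ x in J \ I, gaussianPDF 0 v a := by
          apply setLIntegral_mono' (mJ.diff mI)
          intro x hx
          apply mono
          have := hx.2
          by_contra hc
          push Not at hc
          exact this (abs_lt.1 (abs_lt_of_sq_lt_sq hc ha))
      _ = ∫⁻ x in I \ J, gaussianPDF 0 v a := by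
          simp only [setLIntegral_const, hvol]
      _ ≤ ∫⁻ x in I \ J, gaussianPDF 0 v x := by
          apply setLIntegral_mono' (mI.diff mJ)
          intro x hx
          apply mono
          have := hx.1
          exact sq_le_sq' this.1.le this.2.le
  rw [← measure_inter_add_sdiff J mI, ← measure_inter_add_sdiff I mJ, Set.inter_comm I J]
  gcongr

lemma aux_tail (μ : ℝ) (v : NNReal) (hv : v ≠ 0) (d : ℝ) :
    gaussianReal 0 v {x | d ≤ x ^ 2} ≤ gaussianReal μ v {x | d ≤ x ^ 2} := by
  rcases le_or_gt d 0 with hd | hd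
  · have : {x : ℝ | d ≤ x ^ 2} = Set.univ := by
      ext x; simpa using hd.trans (sq_nonneg x)
    simp [this]
  · have : {x : ℝ | d ≤ x ^ 2} = (Set.Ioo (-√d) (√d))ᶜ := by
      ext x
      simp only [Set.mem_setOf_eq, Set.mem_compl_iff, Set.mem_Ioo]
      rw [← Real.sq_lt, not_lt]
    rw [this, prob_compl_eq_one_sub measurableSet_Ioo, prob_compl_eq_one_sub measurableSet_Ioo]
    exact tsub_le_tsub_left (aux_one μ v hv _ (Real.sqrt_nonneg d)) 1

lemma aux_pi (μ : ℝ) (v : NNReal) (hv : v ≠ 0) (k : ℕ) : ∀ c : ℝ,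
    (Measure.pi fun _ : Fin k => gaussianReal 0 v) {x : Fin k → ℝ | c ≤ ∑ i, (x i) ^ 2} ≤
      (Measure.pi fun _ : Fin k => gaussianReal μ v) {x : Fin k → ℝ | c ≤ ∑ i, (x i) ^ 2} := by
  induction k with
  | zero => intro c; rw [Measure.pi_of_empty, Measure.pi_of_empty]
  | succ k ih =>
    intro c
    let S : Set (ℝ × (Fin k → ℝ)) := {p | c ≤ p.1 ^ 2 + ∑ i, (p.2 i) ^ 2}
    have mS : MeasurableSet S := measurableSet_le (by fun_prop) (by fun_prop)
    have key : ∀ m : ℝ, (Measure.pi fun _ : Fin (k+1) => gaussianReal m v)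
        {x : Fin (k+1) → ℝ | c ≤ ∑ i, (x i) ^ 2} =
        ((gaussianReal m v).prod (Measure.pi fun _ : Fin k => gaussianReal m v)) S := by
      intro m
      have h := measurePreserving_piFinSuccAbove (fun _ : Fin (k+1) => gaussianReal m v) 0
      rw [← h.measure_preimage mS.nullMeasurableSet]
      congr 1
      ext x
      simp [S, Fin.sum_univ_succ, MeasurableEquiv.piFinSuccAbove, Fin.tail]
    rw [key, key]
    calc _ ≤ ((gaussianReal 0 v).prod (Measure.pi fun _ : Fin k => gaussianReal μ v)) S := by
          rw [Measure.prod_apply mS, Measure.prod_apply mS]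
          apply lintegral_mono
          intro x
          have := ih (c - x ^ 2)
          simpa [S, sub_le_iff_le_add, add_comm] using this
      _ ≤ _ := by
          rw [Measure.prod_apply_symm mS, Measure.prod_apply_symm mS]
          apply lintegral_mono
          intro y
          have := aux_tail μ v hv (c - ∑ i, (y i) ^ 2)
          simpa [S, sub_le_iff_le_add] using this

/-- Lemma (anti-concentration of the noncentral chi-square distribution): if `X₁, …, X_k` are
iid `N(0,σ²)` and `Y₁, …, Y_k` are iid `N(μ,σ²)`, then for every `t`,
`ℙ(Σ Xᵢ² ≥ t²) ≤ ℙ(Σ Yᵢ² ≥ t²)`. -/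
theorem stmt14 (k : ℕ) (μ σ : ℝ) (hσ : 0 < σ) (t : ℝ) :
    (Measure.pi fun _ : Fin k => gaussianReal 0 (Real.toNNReal (σ ^ 2)))
        {x : Fin k → ℝ | t ^ 2 ≤ ∑ i, (x i) ^ 2} ≤
      (Measure.pi fun _ : Fin k => gaussianReal μ (Real.toNNReal (σ ^ 2)))
        {x : Fin k → ℝ | t ^ 2 ≤ ∑ i, (x i) ^ 2} := by
  exact aux_pi μ _ (by simpa using hσ.ne') k _
end

section
/- Let μ ∈ ℝ and σ > 0. Let X₀, X₁, …, X_n, Y₀ be independent N(0,σ²) random variables and Y₁, …, Y_n be independent N(μ,σ²) random variables, with Y₀, Y₁, …, Y_n independent. Then for every t ∈ (0,1), ℙ( Y₀²/(Y₀² + Σ_{i=1}^{n} Yᵢ²) ≥ t² ) ≤ ℙ( X₀²/(X₀² + Σ_{i=1}^{n} Xᵢ²) ≥ t² ). -/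
open MeasureTheory ProbabilityTheory

lemma gpdf_le (v : NNReal) {a b m k : ℝ} (h : |a - m| ≤ |b - k|) :
    gaussianPDF k v b ≤ gaussianPDF m v a := by
  unfold gaussianPDF gaussianPDFReal
  apply ENNReal.ofReal_le_ofReal
  have := sq_le_sq.2 h
  gcongr

lemma one_dim (m : ℝ) (v : NNReal) (hv : v ≠ 0) (A : Set ℝ) (hA : MeasurableSet A)
    (hs : ∀ x ∈ A, ∀ y : ℝ, |y| ≤ |x| → y ∈ A) :
    gaussianReal m v A ≤ gaussianReal 0 v A := by
  have key : ∀ k : ℝ, gaussianReal k v A = ∫⁻ x, A.indicator (gaussianPDF k v) x := by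
    intro k
    rw [gaussianReal_apply _ hv, lintegral_indicator hA]
  have meas : ∀ k : ℝ, Measurable (A.indicator (gaussianPDF k v)) :=
    fun k => (measurable_gaussianPDF k v).indicator hA
  have two : ∀ k : ℝ, gaussianReal k v A + gaussianReal k v A =
      ∫⁻ x, (A.indicator (gaussianPDF k v) x + A.indicator (gaussianPDF k v) (m - x)) := by
    intro k
    rw [lintegral_add_left (meas k), lintegral_sub_left_eq_self, ← key]
  have h2 : gaussianReal m v A + gaussianReal m v A ≤
      gaussianReal 0 v A + gaussianReal 0 v A := by
    rw [two, two]
    apply lintegral_mono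
    intro x
    have e1 : gaussianPDF m v (m - x) = gaussianPDF 0 v x :=
      le_antisymm (gpdf_le v (by simp)) (gpdf_le v (by simp))
    have e2 : gaussianPDF m v x = gaussianPDF 0 v (m - x) :=
      le_antisymm (gpdf_le v (by simp [abs_sub_comm])) (gpdf_le v (by simp [abs_sub_comm]))
    by_cases ha : x ∈ A <;> by_cases hb : m - x ∈ A
    · simp only [Set.indicator_of_mem ha, Set.indicator_of_mem hb, e1, e2]
      rw [add_comm]
    · simp only [Set.indicator_of_mem ha, Set.indicator_of_notMem hb, e2, add_zero]
      apply gpdf_le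
      by_contra hc
      exact hb (hs x ha _ (by simpa using (not_le.1 hc).le))
    · simp only [Set.indicator_of_notMem ha, Set.indicator_of_mem hb, e1, zero_add]
      apply gpdf_le
      by_contra hc
      exact ha (hs _ hb _ (by simpa using (not_le.1 hc).le))
    · simp [Set.indicator_of_notMem ha, Set.indicator_of_notMem hb]
  by_contra hc
  rw [not_le] at hc
  exact absurd h2 (not_le.2 (ENNReal.add_lt_add hc hc))

lemma pre_cons (n : ℕ) (B : Set (Fin (n + 1) → ℝ)) :
    (MeasurableEquiv.piFinSuccAbove (fun _ : Fin (n + 1) => ℝ) 0).symm ⁻¹' B =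
    {p : ℝ × (Fin n → ℝ) | (Fin.cons p.1 p.2 : Fin (n + 1) → ℝ) ∈ B} := by
  ext p
  have : (MeasurableEquiv.piFinSuccAbove (fun _ : Fin (n + 1) => ℝ) 0).symm p =
      (Fin.cons p.1 p.2 : Fin (n + 1) → ℝ) := by
    simp [MeasurableEquiv.piFinSuccAbove, Fin.insertNthEquiv]
  rw [Set.mem_preimage, this, Set.mem_ofPred_eq]

lemma pi_cons (n : ℕ) (ν : Fin (n + 1) → Measure ℝ) [∀ i, IsProbabilityMeasure (ν i)]
    (B : Set (Fin (n + 1) → ℝ)) (hB : MeasurableSet B) :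
    Measure.pi ν B = ((ν 0).prod (Measure.pi fun i : Fin n => ν i.succ))
      {p : ℝ × (Fin n → ℝ) | (Fin.cons p.1 p.2 : Fin (n + 1) → ℝ) ∈ B} := by
  have h := (measurePreserving_piFinSuccAbove ν 0).symm
  rw [← h.measure_preimage hB.nullMeasurableSet, pre_cons]
  simp only [Fin.succAbove_zero]

lemma meas_cons (n : ℕ) (B : Set (Fin (n + 1) → ℝ)) (hB : MeasurableSet B) :
    MeasurableSet {p : ℝ × (Fin n → ℝ) | (Fin.cons p.1 p.2 : Fin (n + 1) → ℝ) ∈ B} := by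
  rw [← pre_cons]
  exact (MeasurableEquiv.piFinSuccAbove (fun _ : Fin (n + 1) => ℝ) 0).symm.measurable hB

lemma multi (v : NNReal) (hv : v ≠ 0) (n : ℕ) : ∀ (m : Fin n → ℝ) (B : Set (Fin n → ℝ)),
    MeasurableSet B → (∀ x ∈ B, ∀ y : Fin n → ℝ, (∀ i, |y i| ≤ |x i|) → y ∈ B) →
    (Measure.pi fun i => gaussianReal (m i) v) B ≤
      (Measure.pi fun _ : Fin n => gaussianReal 0 v) B := by
  induction n with
  | zero =>
    intro m B _ _
    apply le_of_eq
    congr 2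
    funext i
    exact i.elim0
  | succ n ih =>
    intro m B hB hs
    have hM := meas_cons n B hB
    rw [pi_cons n _ B hB, pi_cons n _ B hB]
    trans ((gaussianReal (m 0) v).prod (Measure.pi fun _ : Fin n => gaussianReal 0 v))
      {p : ℝ × (Fin n → ℝ) | (Fin.cons p.1 p.2 : Fin (n + 1) → ℝ) ∈ B}
    · rw [Measure.prod_apply hM, Measure.prod_apply hM]
      apply lintegral_mono
      intro x
      apply ih _ _ (measurable_prodMk_left hM)
      intro z hz y hy
      refine hs _ hz _ ?_
      intro i
      refine Fin.cases ?_ (fun j => ?_) i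
      · simp
      · simpa using hy j
    · rw [Measure.prod_apply_symm hM, Measure.prod_apply_symm hM]
      apply lintegral_mono
      intro x
      apply one_dim _ _ hv _ (measurable_prodMk_right hM)
      intro z hz y hy
      refine hs _ hz _ ?_
      intro i
      refine Fin.cases ?_ (fun j => ?_) i
      · simpa using hy
      · simp

/-- Lemma (comparison of ratios of noncentral and central chi-square variables): let
`X₀, X₁, …, X_n, Y₀ ∼ N(0,σ²)` and `Y₁, …, Y_n ∼ N(μ,σ²)` all be independent. Then for every
`t ∈ (0,1)`,
`ℙ(Y₀²/(Y₀² + Σᵢ Yᵢ²) ≥ t²) ≤ ℙ(X₀²/(X₀² + Σᵢ Xᵢ²) ≥ t²)`.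
(The `Y`-variables are modeled by the coordinates of a product measure whose `0`-th factor is
`N(0,σ²)` and whose other factors are `N(μ,σ²)`; the `X`-variables by the standard product of
`N(0,σ²)`.) -/
theorem stmt15 (n : ℕ) (μ σ : ℝ) (hσ : 0 < σ) (t : ℝ) (ht : t ∈ Set.Ioo (0 : ℝ) 1) :
    (Measure.pi fun i : Fin (n + 1) =>
        gaussianReal (if i = 0 then 0 else μ) (Real.toNNReal (σ ^ 2)))
        {x : Fin (n + 1) → ℝ |
          t ^ 2 ≤ (x 0) ^ 2 / ((x 0) ^ 2 + ∑ i : Fin n, (x i.succ) ^ 2)} ≤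
      (Measure.pi fun _ : Fin (n + 1) => gaussianReal 0 (Real.toNNReal (σ ^ 2)))
        {x : Fin (n + 1) → ℝ |
          t ^ 2 ≤ (x 0) ^ 2 / ((x 0) ^ 2 + ∑ i : Fin n, (x i.succ) ^ 2)} := by
  have hv : Real.toNNReal (σ ^ 2) ≠ 0 := by
    simpa using hσ.ne'
  have hB : MeasurableSet {x : Fin (n + 1) → ℝ |
      t ^ 2 ≤ (x 0) ^ 2 / ((x 0) ^ 2 + ∑ i : Fin n, (x i.succ) ^ 2)} := by
    apply measurableSet_le
    · fun_prop
    · fun_prop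
  have hM := meas_cons n _ hB
  rw [pi_cons n _ _ hB, pi_cons n _ _ hB, Measure.prod_apply hM, Measure.prod_apply hM]
  simp only [if_true, Fin.succ_ne_zero, if_false]
  apply lintegral_mono
  intro a
  apply multi _ hv n (fun _ => μ) _ (measurable_prodMk_left hM)
  intro x hx y hy
  simp only [Set.mem_preimage, Set.mem_ofPred_eq, Fin.cons_zero, Fin.cons_succ] at hx ⊢
  have ht0 : 0 < t ^ 2 := pow_pos ht.1 2
  have ha : 0 < a ^ 2 := by
    by_contra hc
    have h0 : a ^ 2 = 0 := le_antisymm (not_lt.1 hc) (sq_nonneg a)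
    rw [h0, zero_div] at hx
    linarith
  refine hx.trans ?_
  have hy0 : 0 ≤ ∑ i : Fin n, (y i) ^ 2 := Finset.sum_nonneg fun i _ => sq_nonneg _
  have hle : ∑ i : Fin n, (y i) ^ 2 ≤ ∑ i : Fin n, (x i) ^ 2 :=
    Finset.sum_le_sum fun i _ => sq_le_sq.2 (hy i)
  apply div_le_div_of_nonneg_left ha.le (by linarith) (by linarith)
end
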